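/- arXiv:1602.03586 — 9 statements merged into one kernel-verified Lean document; each statement's English description precedes it below -/
import Mathlib

section
/- Let n ≥ 3 and s ≥ 2 be integers, let P be a non-trivial protocol on C_n with s colours and let X be uniformly distributed on Fix(P). For any three integers i, j, k with 1 ≤ i < j and j + 1 < k ≤ n, one has H_i^k ≤ H_i^j + H_{j+1}^k. -/
open Finset

/-- Base-`s` Shannon entropy of the random variable `g(X)` where `X` is uniformly
distributed on the finite set `F`. -/
noncomputable def entOf (s : ℕ) {α β : Type} [DecidableEq β] [Fintype β]
    (F : Finset α) (g : α → β) : ℝ :=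
  -∑ y : β, (((F.filter fun c => g c = y).card : ℝ) / (F.card : ℝ)) *
      Real.logb s (((F.filter fun c => g c = y).card : ℝ) / (F.card : ℝ))

/-- The fixed set of a protocol `f` on the cycle `C_n` with `s` colours:
all colourings `c` with `c i = f i (c (i-1), c (i+1))` for every vertex `i`
(vertex indices taken modulo `n`). -/
def cycleFix (n s : ℕ) [NeZero n] (f : ZMod n → Fin s × Fin s → Fin s) :
    Finset (ZMod n → Fin s) :=
  Finset.univ.filter fun c => ∀ i, c i = f i (c (i - 1), c (i + 1))

/-- `h(i₁,…,i_k)`: entropy (base `s`) of the tuple of coordinates of `X ∈_u F`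
indexed by the set `T` of integers (interpreted modulo `n`). -/
noncomputable def entT (n s : ℕ) [NeZero n] (F : Finset (ZMod n → Fin s))
    (T : Finset ℤ) : ℝ :=
  entOf s F (fun c => fun i : {x // x ∈ T} => c ((i.1 : ℤ) : ZMod n))

/-- `H_j^k = h(j,j+1,…,k-1) + h(j+1,j+2,…,k)`. -/
noncomputable def entH (n s : ℕ) [NeZero n] (F : Finset (ZMod n → Fin s))
    (j k : ℤ) : ℝ :=
  entT n s F (Finset.Icc j (k - 1)) + entT n s F (Finset.Icc (j + 1) k)


lemma aux_fiber {α β : Type} [DecidableEq β] [Fintype β] (F : Finset α) (g : α → β)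
    (φ : β → ℝ) :
    ∑ c ∈ F, φ (g c) = ∑ y : β, ((F.filter fun c => g c = y).card : ℝ) * φ y := by
  rw [← Finset.sum_fiberwise F g]
  refine Finset.sum_congr rfl fun y _ => ?_
  rw [Finset.sum_congr rfl (g := fun _ => φ y)]
  · simp
  · intro c hc
    rw [(Finset.mem_filter.1 hc).2]

lemma entOf_eq (s : ℕ) {α β : Type} [DecidableEq β] [Fintype β] (F : Finset α) (g : α → β) :
    entOf s F g = -∑ c ∈ F, (1 / (F.card : ℝ)) *
      Real.logb s (((F.filter fun d => g d = g c).card : ℝ) / (F.card : ℝ)) := by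
  rw [aux_fiber F g (fun y => (1 / (F.card : ℝ)) *
      Real.logb s (((F.filter fun d => g d = y).card : ℝ) / (F.card : ℝ)))]
  unfold entOf
  congr 1
  refine Finset.sum_congr rfl fun y _ => ?_
  ring

lemma entOf_le (s : ℕ) (hs : 2 ≤ s) {α β γ δ : Type} [DecidableEq β] [Fintype β]
    [DecidableEq γ] [Fintype γ] [DecidableEq δ] [Fintype δ]
    (F : Finset α) (hF : F.Nonempty) (g : α → β) (g₁ : α → γ) (g₂ : α → δ)
    (h : ∀ c ∈ F, ∀ d ∈ F, g₁ c = g₁ d → g₂ c = g₂ d → g c = g d) :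
    entOf s F g ≤ entOf s F g₁ + entOf s F g₂ := by
  have hN : (0 : ℝ) < F.card := by exact_mod_cast hF.card_pos
  have hls : 0 < Real.log s := Real.log_pos (by exact_mod_cast hs)
  rw [entOf_eq, entOf_eq, entOf_eq]
  set N : ℝ := (F.card : ℝ) with hNdef
  let G : α → γ × δ := fun c => (g₁ c, g₂ c)
  let n₁ : γ → ℝ := fun y => ((F.filter fun d => g₁ d = y).card : ℝ)
  let n₂ : δ → ℝ := fun y => ((F.filter fun d => g₂ d = y).card : ℝ)
  let m : γ × δ → ℝ := fun y => ((F.filter fun d => G d = y).card : ℝ)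
  have key : ∀ c ∈ F, Real.logb s (n₁ (g₁ c) / N) + Real.logb s (n₂ (g₂ c) / N)
      - Real.logb s (((F.filter fun d => g d = g c).card : ℝ) / N)
      ≤ (n₁ (g₁ c) * n₂ (g₂ c) / m (G c) / N - 1) / Real.log s := by
    intro c hc
    have h1 : 0 < n₁ (g₁ c) := by
      have : 0 < (F.filter fun d => g₁ d = g₁ c).card :=
        Finset.card_pos.2 ⟨c, by simp [hc]⟩
      exact Nat.cast_pos.2 this
    have h2 : 0 < n₂ (g₂ c) := by
      have : 0 < (F.filter fun d => g₂ d = g₂ c).card :=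
        Finset.card_pos.2 ⟨c, by simp [hc]⟩
      exact Nat.cast_pos.2 this
    have h3 : 0 < m (G c) := by
      have : 0 < (F.filter fun d => G d = G c).card :=
        Finset.card_pos.2 ⟨c, by simp [hc]⟩
      exact Nat.cast_pos.2 this
    have h4 : m (G c) ≤ ((F.filter fun d => g d = g c).card : ℝ) := by
      have : (F.filter fun d => G d = G c).card ≤ (F.filter fun d => g d = g c).card := by
        apply Finset.card_le_card
        intro d hd
        rw [Finset.mem_filter] at hd ⊢
        have := Prod.ext_iff.1 hd.2
        exact ⟨hd.1, h d hd.1 c hc this.1 this.2⟩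
      exact Nat.cast_le.2 this
    set q : ℝ := ((F.filter fun d => g d = g c).card : ℝ)
    have h5 : Real.log (m (G c) / N) ≤ Real.log (q / N) :=
      Real.log_le_log (by positivity) (by gcongr)
    have h6 : Real.log (n₁ (g₁ c) * n₂ (g₂ c) / m (G c) / N)
      ≤ n₁ (g₁ c) * n₂ (g₂ c) / m (G c) / N - 1 := Real.log_le_sub_one_of_pos (by positivity)
    have h7 : Real.log (n₁ (g₁ c) * n₂ (g₂ c) / m (G c) / N) =
        Real.log (n₁ (g₁ c) / N) + Real.log (n₂ (g₂ c) / N) - Real.log (m (G c) / N) := by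
      rw [Real.log_div (by positivity) (by positivity), Real.log_div (by positivity) (by positivity),
        Real.log_mul (by positivity) (by positivity), Real.log_div (by positivity) (by positivity),
        Real.log_div (by positivity) (by positivity), Real.log_div (by positivity) (by positivity)]
      ring
    simp only [Real.logb]
    rw [← add_div, ← sub_div]
    refine div_le_div_of_nonneg_right ?_ hls.le
    linarith
  have hsum : ∑ c ∈ F, n₁ (g₁ c) * n₂ (g₂ c) / m (G c) ≤ N * N := by
    have e := aux_fiber F G (fun y => n₁ y.1 * n₂ y.2 / m y)
    refine e.le.trans ?_
    have t1 : ∑ y, n₁ y = N := by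
      have := aux_fiber F g₁ (fun _ => 1)
      simp only [mul_one] at this
      rw [← this]; simp [hNdef]
    have t2 : ∑ y, n₂ y = N := by
      have := aux_fiber F g₂ (fun _ => 1)
      simp only [mul_one] at this
      rw [← this]; simp [hNdef]
    have : N * N = ∑ y : γ × δ, n₁ y.1 * n₂ y.2 := by
      rw [Fintype.sum_prod_type, ← Finset.sum_mul_sum, t1, t2]
    rw [this]
    refine Finset.sum_le_sum fun y _ => ?_
    change m y * (n₁ y.1 * n₂ y.2 / m y) ≤ _
    have hp : 0 ≤ n₁ y.1 * n₂ y.2 := mul_nonneg (Nat.cast_nonneg _) (Nat.cast_nonneg _)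
    by_cases hm : m y = 0
    · simpa [hm] using hp
    · rw [mul_div_cancel₀ _ hm]
  have h0 := Finset.sum_le_sum key
  have h8 : ∑ c ∈ F, (n₁ (g₁ c) * n₂ (g₂ c) / m (G c) / N - 1) / Real.log s ≤ 0 := by
    rw [← Finset.sum_div, Finset.sum_sub_distrib, ← Finset.sum_div]
    apply div_nonpos_of_nonpos_of_nonneg _ hls.le
    have : (∑ c ∈ F, n₁ (g₁ c) * n₂ (g₂ c) / m (G c)) / N ≤ N := by
      rw [div_le_iff₀ hN]; exact hsum
    simp only [Finset.sum_const, nsmul_eq_mul, mul_one]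
    linarith
  have h9 := h0.trans h8
  rw [Finset.sum_sub_distrib, Finset.sum_add_distrib] at h9
  simp only [← Finset.mul_sum]
  have h10 := mul_le_mul_of_nonneg_left h9 (show 0 ≤ 1 / N by positivity)
  simp only [n₁, n₂] at h10
  linarith

lemma entT_le (n s : ℕ) [NeZero n] (hs : 2 ≤ s) (f : ZMod n → Fin s × Fin s → Fin s)
    (hne : (cycleFix n s f).Nonempty) (T T₁ T₂ : Finset ℤ) (v : ℤ)
    (h : ∀ x ∈ T, x ≠ v → x ∈ T₁ ∨ x ∈ T₂)
    (hv1 : v - 1 ∈ T₁ ∨ v - 1 ∈ T₂) (hv2 : v + 1 ∈ T₁ ∨ v + 1 ∈ T₂) :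
    entT n s (cycleFix n s f) T ≤
      entT n s (cycleFix n s f) T₁ + entT n s (cycleFix n s f) T₂ := by
  apply entOf_le s hs _ hne
  intro c hc d hd h1 h2
  have hag : ∀ x : ℤ, (x ∈ T₁ ∨ x ∈ T₂) → c (x : ZMod n) = d (x : ZMod n) := by
    rintro x (hx | hx)
    · exact congrFun h1 ⟨x, hx⟩
    · exact congrFun h2 ⟨x, hx⟩
  funext ⟨x, hx⟩
  show c (x : ZMod n) = d (x : ZMod n)
  by_cases hxv : x = v
  · subst hxv
    have hc' := (Finset.mem_filter.1 hc).2 (x : ZMod n)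
    have hd' := (Finset.mem_filter.1 hd).2 (x : ZMod n)
    have a := hag _ hv1
    have b := hag _ hv2
    push_cast at a b
    rw [hc', hd', a, b]
  · exact hag x (h x hx hxv)

/-- Let `n ≥ 3` and `s ≥ 2`, let `P` be a non-trivial protocol on
`C_n` with `s` colours and let `X` be uniform on `Fix(P)`.  For integers `i, j, k`
with `1 ≤ i < j` and `j + 1 < k ≤ n` we have `H_i^k ≤ H_i^j + H_{j+1}^k`. -/
theorem cycle_guessing_stmt1 (n s : ℕ) [NeZero n] (hn : 3 ≤ n) (hs : 2 ≤ s)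
    (f : ZMod n → Fin s × Fin s → Fin s)
    (hne : (cycleFix n s f).Nonempty)
    (i j k : ℤ) (hi : 1 ≤ i) (hij : i < j) (hjk : j + 1 < k) (hk : k ≤ n) :
    entH n s (cycleFix n s f) i k ≤
      entH n s (cycleFix n s f) i j + entH n s (cycleFix n s f) (j + 1) k := by

  have A := entT_le n s hs f hne (Finset.Icc i (k - 1)) (Finset.Icc i (j - 1))
    (Finset.Icc (j + 1) (k - 1)) j (by intro x; simp only [Finset.mem_Icc]; omega)
    (by simp only [Finset.mem_Icc]; omega) (by simp only [Finset.mem_Icc]; omega)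
  have B := entT_le n s hs f hne (Finset.Icc (i + 1) k) (Finset.Icc (i + 1) j)
    (Finset.Icc (j + 1 + 1) k) (j + 1) (by intro x; simp only [Finset.mem_Icc]; omega)
    (by simp only [Finset.mem_Icc]; omega) (by simp only [Finset.mem_Icc]; omega)
  unfold entH
  linarith
end

section
/- Let n ≥ 4 and s ≥ 2 be integers, let P be a non-trivial protocol on C_n with s colours and let X be uniformly distributed on Fix(P). For any integers j, k with 1 ≤ j and j + 3 ≤ k ≤ n, one has H_j^k ≤ Σ_{i=j}^{k} h(i). -/
open Finset

noncomputable def cgN {α β : Type} [DecidableEq β] (F : Finset α) (g : α → β) (c : α) : ℝ :=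
  ((F.filter fun x => g x = g c).card : ℝ)

lemma cgN_pos {α β : Type} [DecidableEq β] (F : Finset α) (g : α → β) (c : α) (hc : c ∈ F) :
    0 < cgN F g c := by
  unfold cgN
  exact_mod_cast Finset.card_pos.mpr ⟨c, by simp [hc]⟩

lemma cg_entOf_eq (s : ℕ) {α β : Type} [DecidableEq β] [Fintype β]
    (F : Finset α) (g : α → β) (hF : F.Nonempty) :
    entOf s F g = (Real.log F.card - (∑ c ∈ F, Real.log (cgN F g c)) / F.card) / Real.log s := by
  have hF0 : (0 : ℝ) < F.card := by exact_mod_cast Finset.card_pos.mpr hF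
  have h1 : ∑ y : β, (((F.filter fun c => g c = y).card : ℝ) / (F.card : ℝ)) *
      Real.logb s (((F.filter fun c => g c = y).card : ℝ) / (F.card : ℝ))
      = ∑ c ∈ F, (1 / (F.card : ℝ)) * Real.logb s (cgN F g c / F.card) := by
    rw [← Finset.sum_fiberwise F g]
    refine Finset.sum_congr rfl fun y _ => ?_
    rw [Finset.sum_congr rfl (g := fun _ => (1 / (F.card : ℝ)) *
      Real.logb s (((F.filter fun c => g c = y).card : ℝ) / (F.card : ℝ)))]
    · rw [Finset.sum_const, nsmul_eq_mul]; ring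
    · intro x hx
      rw [Finset.mem_filter] at hx
      simp only [cgN, hx.2]
  unfold entOf
  rw [h1]
  have h2 : ∀ c ∈ F, (1 / (F.card : ℝ)) * Real.logb s (cgN F g c / F.card)
      = (1 / (F.card : ℝ) / Real.log s) * Real.log (cgN F g c)
        - (1 / (F.card : ℝ) / Real.log s) * Real.log F.card := by
    intro c hc
    rw [Real.logb, Real.log_div (cgN_pos F g c hc).ne' hF0.ne']
    ring
  rw [Finset.sum_congr rfl h2, Finset.sum_sub_distrib, ← Finset.mul_sum, Finset.sum_const,
    nsmul_eq_mul]
  have : (F.card : ℝ) * (1 / (F.card : ℝ) / Real.log s * Real.log F.card)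
      = Real.log F.card / Real.log s := by
    field_simp
  rw [this]
  ring

lemma cgN_sum {α β : Type} [DecidableEq β] (F : Finset α) (g : α → β) (c : α) :
    cgN F g c = ∑ x ∈ F, if g x = g c then (1 : ℝ) else 0 := by
  simp [cgN]

lemma cg_submod (s : ℕ) (hs : 2 ≤ s) {α β₁ β₂ β₃ β₄ : Type}
    [DecidableEq β₁] [Fintype β₁] [DecidableEq β₂] [Fintype β₂]
    [DecidableEq β₃] [Fintype β₃] [DecidableEq β₄] [Fintype β₄]
    (F : Finset α) (hF : F.Nonempty) (A : α → β₁) (B : α → β₂) (D : α → β₃) (C : α → β₄)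
    (hD : ∀ x ∈ F, ∀ y ∈ F, (D x = D y ↔ A x = A y ∧ B x = B y))
    (hA : ∀ x ∈ F, ∀ y ∈ F, A x = A y → C x = C y)
    (hB : ∀ x ∈ F, ∀ y ∈ F, B x = B y → C x = C y) :
    entOf s F D + entOf s F C ≤ entOf s F A + entOf s F B := by
  have hF0 : (0 : ℝ) < F.card := by exact_mod_cast Finset.card_pos.mpr hF
  have hls : 0 < Real.log s := Real.log_pos (by exact_mod_cast hs)
  have key : ∑ c ∈ F, cgN F A c * cgN F B c / (cgN F D c * cgN F C c) ≤ F.card := by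
    have e1 : ∀ c ∈ F, cgN F A c * cgN F B c / (cgN F D c * cgN F C c) =
        ∑ x ∈ F, ∑ y ∈ F, (if A x = A c ∧ B y = B c then
          1 / (cgN F D c * cgN F C c) else 0) := by
      intro c hc
      rw [cgN_sum F A, cgN_sum F B, Finset.sum_mul_sum, Finset.sum_div]
      refine Finset.sum_congr rfl fun x _ => ?_
      rw [Finset.sum_div]
      refine Finset.sum_congr rfl fun y _ => ?_
      by_cases h1 : A x = A c <;> by_cases h2 : B y = B c <;> simp [h1, h2]
    rw [Finset.sum_congr rfl e1, Finset.sum_comm]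
    have e2 : ∀ x ∈ F, ∑ c ∈ F, ∑ y ∈ F, (if A x = A c ∧ B y = B c then
          1 / (cgN F D c * cgN F C c) else 0) ≤ 1 := by
      intro x hx
      rw [Finset.sum_comm]
      have hCx := cgN_pos F C x hx
      have e3 : ∀ y ∈ F, ∑ c ∈ F, (if A x = A c ∧ B y = B c then
          1 / (cgN F D c * cgN F C c) else 0) ≤ (if C y = C x then 1 else 0) / cgN F C x := by
        intro y hy
        by_cases hex : ∃ c ∈ F, A x = A c ∧ B y = B c
        · obtain ⟨c₀, hc₀, ha, hb⟩ := hex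
          have hxC := hA x hx c₀ hc₀ ha
          have hyC := hB y hy c₀ hc₀ hb
          rw [if_pos (hyC.trans hxC.symm)]
          have hD0 := cgN_pos F D c₀ hc₀
          apply le_of_eq
          have e4 : ∀ c ∈ F, (if A x = A c ∧ B y = B c then
              1 / (cgN F D c * cgN F C c) else 0) =
              (if D c = D c₀ then (1 : ℝ) else 0) * (1 / (cgN F D c₀ * cgN F C x)) := by
            intro c hc
            have hiff : (A x = A c ∧ B y = B c) ↔ D c = D c₀ := by
              rw [hD c hc c₀ hc₀, ha, hb]
              exact ⟨fun h => ⟨h.1.symm, h.2.symm⟩, fun h => ⟨h.1.symm, h.2.symm⟩⟩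
            by_cases h : D c = D c₀
            · have h' := hiff.mpr h
              have hcC : C c = C x := (hA x hx c hc h'.1).symm
              rw [if_pos h', if_pos h]
              simp only [cgN, h, hcC, one_mul]
            · rw [if_neg h, if_neg (fun h' => h (hiff.mp h')), zero_mul]
          rw [Finset.sum_congr rfl e4, ← Finset.sum_mul, ← cgN_sum]
          field_simp
        · rw [Finset.sum_eq_zero]
          · positivity
          · intro c hc
            rw [if_neg (fun h => hex ⟨c, hc, h⟩)]
      refine (Finset.sum_le_sum e3).trans ?_
      rw [← Finset.sum_div, ← cgN_sum, div_self hCx.ne']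
    refine (Finset.sum_le_sum e2).trans ?_
    simp
  have key2 : ∑ c ∈ F, (Real.log (cgN F A c) + Real.log (cgN F B c)
      - Real.log (cgN F D c) - Real.log (cgN F C c)) ≤ 0 := by
    have : ∀ c ∈ F, (Real.log (cgN F A c) + Real.log (cgN F B c)
      - Real.log (cgN F D c) - Real.log (cgN F C c)) ≤
        cgN F A c * cgN F B c / (cgN F D c * cgN F C c) - 1 := by
      intro c hc
      have a := cgN_pos F A c hc
      have b := cgN_pos F B c hc
      have d := cgN_pos F D c hc
      have e := cgN_pos F C c hc
      have := Real.log_le_sub_one_of_pos (x := cgN F A c * cgN F B c / (cgN F D c * cgN F C c))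
        (by positivity)
      rw [Real.log_div (by positivity) (by positivity), Real.log_mul a.ne' b.ne',
        Real.log_mul d.ne' e.ne'] at this
      linarith
    refine (Finset.sum_le_sum this).trans ?_
    rw [Finset.sum_sub_distrib]
    simp
    linarith
  rw [cg_entOf_eq s F A hF, cg_entOf_eq s F B hF, cg_entOf_eq s F C hF, cg_entOf_eq s F D hF,
    ← add_div, ← add_div]
  apply div_le_div_of_nonneg_right _ hls.le
  simp only [Finset.sum_sub_distrib, Finset.sum_add_distrib] at key2
  have h3 : ∑ c ∈ F, Real.log (cgN F A c) / F.card + ∑ c ∈ F, Real.log (cgN F B c) / F.card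
    - ∑ c ∈ F, Real.log (cgN F D c) / F.card - ∑ c ∈ F, Real.log (cgN F C c) / F.card ≤ 0 := by
    simp only [← Finset.sum_div, ← add_div, ← sub_div]
    exact div_nonpos_of_nonpos_of_nonneg key2 hF0.le
  simp only [← Finset.sum_div] at h3
  linarith

lemma cg_entT_submod (n s : ℕ) [NeZero n] (hs : 2 ≤ s) (F : Finset (ZMod n → Fin s))
    (hF : F.Nonempty) (A B D C : Finset ℤ)
    (hAD : A ⊆ D) (hBD : B ⊆ D) (hCA : C ⊆ A) (hCB : C ⊆ B)
    (hD : ∀ x ∈ F, ∀ y ∈ F, (∀ i ∈ A, x (i : ZMod n) = y i) → (∀ i ∈ B, x (i : ZMod n) = y i) →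
      ∀ i ∈ D, x (i : ZMod n) = y i) :
    entT n s F D + entT n s F C ≤ entT n s F A + entT n s F B := by
  unfold entT
  apply cg_submod s hs F hF
  · intro x hx y hy
    simp only [funext_iff, Subtype.forall]
    exact ⟨fun h => ⟨fun i hi => h i (hAD hi), fun i hi => h i (hBD hi)⟩,
      fun h => hD x hx y hy h.1 h.2⟩
  · intro x hx y hy
    simp only [funext_iff, Subtype.forall]
    exact fun h i hi => h i (hCA hi)
  · intro x hx y hy
    simp only [funext_iff, Subtype.forall]
    exact fun h i hi => h i (hCB hi)

lemma cg_entT_empty (n s : ℕ) [NeZero n] (F : Finset (ZMod n → Fin s)) (hF : F.Nonempty) :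
    entT n s F ∅ = 0 := by
  have hF0 : (0 : ℝ) < F.card := by exact_mod_cast Finset.card_pos.mpr hF
  unfold entT
  rw [cg_entOf_eq s F _ hF]
  have : ∀ c : ZMod n → Fin s, cgN F (fun c => fun i : {x // x ∈ (∅ : Finset ℤ)} =>
      c ((i.1 : ℤ) : ZMod n)) c = F.card := by
    intro c
    unfold cgN
    rw [Finset.filter_true_of_mem]
    intro x _
    funext i
    exact absurd i.2 (Finset.notMem_empty _)
  simp only [this, Finset.sum_const, nsmul_eq_mul]
  field_simp
  simp

lemma cg_det (n s : ℕ) [NeZero n] (f : ZMod n → Fin s × Fin s → Fin s)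
    (x y : ZMod n → Fin s) (hx : x ∈ cycleFix n s f) (hy : y ∈ cycleFix n s f)
    (a b c : ℤ) (hb : b = a + 1) (hc : c = a + 2)
    (h1 : x (a : ZMod n) = y a) (h2 : x (c : ZMod n) = y c) :
    x (b : ZMod n) = y b := by
  simp only [cycleFix, Finset.mem_filter, Finset.mem_univ, true_and] at hx hy
  rw [hx b, hy b]
  have e1 : ((b : ℤ) : ZMod n) - 1 = (a : ℤ) := by subst hb; push_cast; ring
  have e2 : ((b : ℤ) : ZMod n) + 1 = (c : ℤ) := by subst hb hc; push_cast; ring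
  rw [e1, e2, h1, h2]

/-- Let `n ≥ 4` and `s ≥ 2`, let `P` be a non-trivial protocol on
`C_n` with `s` colours and let `X` be uniform on `Fix(P)`.  For integers `j, k` with
`1 ≤ j` and `j + 3 ≤ k ≤ n` we have `H_j^k ≤ ∑_{i=j}^{k} h(i)`. -/
theorem cycle_guessing_stmt3 (n s : ℕ) [NeZero n] (hn : 4 ≤ n) (hs : 2 ≤ s)
    (f : ZMod n → Fin s × Fin s → Fin s)
    (hne : (cycleFix n s f).Nonempty)
    (j k : ℤ) (hj : 1 ≤ j) (hjk : j + 3 ≤ k) (hk : k ≤ n) :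
    entH n s (cycleFix n s f) j k ≤
      ∑ i ∈ Finset.Icc j k, entT n s (cycleFix n s f) {i} := by
  have hemp := cg_entT_empty n s _ hne
  have tri : ∀ a : ℤ, entT n s (cycleFix n s f) (Finset.Icc a (a + 2)) ≤
      entT n s (cycleFix n s f) {a} + entT n s (cycleFix n s f) {a + 2} := by
    intro a
    have := cg_entT_submod n s hs (cycleFix n s f) hne {a} {a + 2} (Finset.Icc a (a + 2)) ∅
      (by simp) (by simp) (by simp) (by simp) (by
        intro x hx y hy h1 h2 i hi
        simp only [Finset.mem_singleton, forall_eq] at h1 h2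
        rw [Finset.mem_Icc] at hi
        have h3 := cg_det n s f x y hx hy a (a + 1) (a + 2) rfl rfl h1 h2
        have : i = a ∨ i = a + 1 ∨ i = a + 2 := by omega
        rcases this with rfl | rfl | rfl <;> assumption)
    linarith
  clear hk
  induction k, hjk using Int.le_induction with
  | base =>
    unfold entH
    have t1 := tri j
    have t2 := tri (j + 1)
    have e : Finset.Icc j (j + 3) = {j, j + 1, j + 2, j + 3} := by
      ext i; simp only [Finset.mem_Icc, Finset.mem_insert, Finset.mem_singleton]; omega
    rw [e, Finset.sum_insert (by simp), Finset.sum_insert (by simp),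
      Finset.sum_insert (by simp), Finset.sum_singleton]
    rw [show j + 3 - 1 = j + 2 by ring]
    rw [show j + 1 + 2 = j + 3 by ring] at t2
    linarith
  | succ k hk ih =>
    have e : Finset.Icc j (k + 1) = insert (k + 1) (Finset.Icc j k) := by
      ext i; simp only [Finset.mem_Icc, Finset.mem_insert]; omega
    rw [e, Finset.sum_insert (by simp)]
    unfold entH at ih ⊢
    rw [show k + 1 - 1 = k by ring]
    have s1 := cg_entT_submod n s hs (cycleFix n s f) hne (Finset.Icc j (k - 1))
      (Finset.Icc (j + 1) k) (Finset.Icc j k) (Finset.Icc (j + 1) (k - 1))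
      (Finset.Icc_subset_Icc (by omega) (by omega)) (Finset.Icc_subset_Icc (by omega) (by omega))
      (Finset.Icc_subset_Icc (by omega) (by omega)) (Finset.Icc_subset_Icc (by omega) (by omega))
      (by
        intro x hx y hy h1 h2 i hi
        rw [Finset.mem_Icc] at hi
        by_cases h : i ≤ k - 1
        · exact h1 i (Finset.mem_Icc.mpr ⟨hi.1, h⟩)
        · exact h2 i (Finset.mem_Icc.mpr ⟨by omega, hi.2⟩))
    have s2 := cg_entT_submod n s hs (cycleFix n s f) hne (Finset.Icc (j + 1) (k - 1))
      {k + 1} (Finset.Icc (j + 1) (k + 1)) ∅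
      (Finset.Icc_subset_Icc (by omega) (by omega))
      (by rw [Finset.singleton_subset_iff, Finset.mem_Icc]; omega) (by simp) (by simp)
      (by
        intro x hx y hy h1 h2 i hi
        rw [Finset.mem_Icc] at hi
        simp only [Finset.mem_singleton, forall_eq] at h2
        by_cases h : i ≤ k - 1
        · exact h1 i (Finset.mem_Icc.mpr ⟨hi.1, h⟩)
        · have : i = k ∨ i = k + 1 := by omega
          rcases this with rfl | rfl
          · exact cg_det n s f x y hx hy (i - 1) i (i + 1) (by ring) (by ring)
              (h1 _ (Finset.mem_Icc.mpr ⟨by omega, by omega⟩)) h2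
          · exact h2)
    linarith
end

section
/- Let n ≥ 3 and s ≥ 2 be integers, let P be a non-trivial protocol on C_n with s colours and let X be uniformly distributed on Fix(P). Suppose 1 = d(1) < d(2) < ⋯ < d(k) = n is a sequence of positive integers with k ≥ 2 and d(i+1) ≥ d(i) + 2 for all i. Then 2·log_s fix(P) ≤ H_{d(1)}^{d(2)} + H_{d(2)+1}^{d(3)} + ⋯ + H_{d(k−1)+1}^{d(k)}. -/
open Finset

lemma entOf_eq_aux (s : ℕ) {α β : Type} [DecidableEq β] [Fintype β]
    (F : Finset α) (g : α → β) :
    (F.card : ℝ) * entOf s F g = -∑ c ∈ F, Real.logb s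
      (((F.filter fun c' => g c' = g c).card : ℝ) / (F.card : ℝ)) := by
  classical
  unfold entOf
  rcases F.eq_empty_or_nonempty with rfl | hF
  · simp
  have hF0 : (F.card : ℝ) ≠ 0 := by
    exact_mod_cast hF.card_pos.ne'
  rw [mul_neg, Finset.mul_sum, neg_inj, ← Finset.sum_fiberwise F g]
  refine Finset.sum_congr rfl fun y _ => ?_
  rw [Finset.sum_congr rfl (g := fun _ => Real.logb s
      (((F.filter fun c' => g c' = y).card : ℝ) / (F.card : ℝ)))]
  · rw [Finset.sum_const, nsmul_eq_mul]
    field_simp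
  · intro c hc
    rw [(Finset.mem_filter.1 hc).2]

lemma sum_entOf_ge (s : ℕ) (hs : 2 ≤ s) {α ι : Type} [Fintype ι] {β : ι → Type}
    [∀ i, DecidableEq (β i)] [∀ i, Fintype (β i)]
    (F : Finset α) (hF : F.Nonempty) (g : ∀ i, α → β i)
    (hinj : ∀ c ∈ F, ∀ c' ∈ F, (∀ i, g i c = g i c') → c = c') :
    Real.logb s (F.card : ℝ) ≤ ∑ i, entOf s F (g i) := by
  classical
  have hF0 : (0 : ℝ) < F.card := by exact_mod_cast hF.card_pos
  set p : ∀ i, β i → ℝ := fun i y =>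
    ((F.filter fun c' => g i c' = y).card : ℝ) / (F.card : ℝ) with hp
  have hp0 : ∀ i y, 0 ≤ p i y := fun i y => by positivity
  have hpp : ∀ c ∈ F, ∀ i, 0 < p i (g i c) := fun c hc i => by
    have : 0 < (F.filter fun c' => g i c' = g i c).card :=
      Finset.card_pos.2 ⟨c, by simp [hc]⟩
    have : (0 : ℝ) < (F.filter fun c' => g i c' = g i c).card := by exact_mod_cast this
    simp only [hp]; positivity
  have hp1 : ∀ i, ∑ y, p i y = 1 := fun i => by
    simp only [hp]
    rw [← Finset.sum_div, div_eq_one_iff_eq hF0.ne']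
    have := Finset.card_eq_sum_card_fiberwise (f := g i) (s := F) (t := Finset.univ)
      (fun _ _ => by simp)
    exact_mod_cast this.symm
  have hsum : ∑ c ∈ F, ∏ i, p i (g i c) ≤ 1 := by
    have h1 : ∑ y : (∀ i, β i), ∏ i, p i (y i) = 1 := by
      have := Finset.prod_univ_sum (fun i => (Finset.univ : Finset (β i))) p
      rw [Fintype.piFinset_univ] at this
      rw [← this]; simp [hp1]
    rw [← h1, ← Finset.sum_image (s := F) (g := fun c i => g i c)
      (f := fun y => ∏ i, p i (y i))]
    · exact Finset.sum_le_sum_of_subset_of_nonneg (Finset.subset_univ _)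
        fun y _ _ => Finset.prod_nonneg fun i _ => hp0 _ _
    · intro c hc c' hc' h
      exact hinj c hc c' hc' fun i => congrFun h i
  clear_value p
  have hls : 0 < Real.log s := Real.log_pos (by exact_mod_cast (by omega : 1 < s))
  have key : ∑ c ∈ F, (Real.log F.card + ∑ i, Real.log (p i (g i c))) ≤ 0 := by
    calc _ ≤ ∑ c ∈ F, ((F.card : ℝ) * ∏ i, p i (g i c) - 1) := by
          refine Finset.sum_le_sum fun c hc => ?_
          have hpos : 0 < ∏ i, p i (g i c) := Finset.prod_pos fun i _ => hpp c hc i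
          rw [← Real.log_prod (fun i _ => (hpp c hc i).ne'),
            ← Real.log_mul hF0.ne' hpos.ne']
          exact Real.log_le_sub_one_of_pos (mul_pos hF0 hpos)
      _ ≤ 0 := by
          rw [Finset.sum_sub_distrib, ← Finset.mul_sum]
          simp only [Finset.sum_const, nsmul_eq_mul, mul_one]
          have := mul_le_mul_of_nonneg_left hsum hF0.le
          linarith
  have e : (F.card : ℝ) * ∑ i, entOf s F (g i)
      = -(∑ c ∈ F, ∑ i, Real.log (p i (g i c))) / Real.log s := by
    rw [Finset.mul_sum, Finset.sum_congr rfl (fun i _ => entOf_eq_aux s F (g i)),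
      Finset.sum_neg_distrib, Finset.sum_comm]
    simp only [Real.logb, ← Finset.sum_div, hp]
    ring
  rw [Finset.sum_add_distrib, Finset.sum_const, nsmul_eq_mul] at key
  refine le_of_mul_le_mul_left ?_ hF0
  rw [e, Real.logb, ← mul_div_assoc]
  exact div_le_div_of_nonneg_right (by linarith) hls.le

lemma sum_entT_ge (n s : ℕ) [NeZero n] (hs : 2 ≤ s) (F : Finset (ZMod n → Fin s))
    (hF : F.Nonempty) (I : Finset ℕ) (T : ℕ → Finset ℤ)
    (hinj : ∀ c ∈ F, ∀ c' ∈ F,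
      (∀ i ∈ I, ∀ x ∈ T i, c (x : ZMod n) = c' (x : ZMod n)) → c = c') :
    Real.logb s (F.card : ℝ) ≤ ∑ i ∈ I, entT n s F (T i) := by
  rw [← Finset.sum_coe_sort]
  refine sum_entOf_ge s hs F hF
    (fun (i : I) c => fun x : {x // x ∈ T i} => c ((x.1 : ℤ) : ZMod n)) ?_
  intro c hc c' hc' h
  exact hinj c hc c' hc' fun i hi x hx => congrFun (h ⟨i, hi⟩) ⟨x, hx⟩

/-- Let `n ≥ 3` and `s ≥ 2`, let `P` be a non-trivial protocol on
`C_n` with `s` colours and let `X` be uniform on `Fix(P)`.  If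
`1 = d(1) < d(2) < ⋯ < d(k) = n` with `k ≥ 2` and `d(i+1) ≥ d(i) + 2` for all
`1 ≤ i < k`, then
`2 log_s fix(P) ≤ H_{d(1)}^{d(2)} + H_{d(2)+1}^{d(3)} + ⋯ + H_{d(k-1)+1}^{d(k)}`. -/
theorem cycle_guessing_stmt4 (n s : ℕ) [NeZero n] (hn : 3 ≤ n) (hs : 2 ≤ s)
    (f : ZMod n → Fin s × Fin s → Fin s)
    (hne : (cycleFix n s f).Nonempty)
    (k : ℕ) (hk : 2 ≤ k) (d : ℕ → ℤ)
    (hd1 : d 1 = 1) (hdk : d k = (n : ℤ))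
    (hstep : ∀ i : ℕ, 1 ≤ i → i < k → d i + 2 ≤ d (i + 1)) :
    2 * Real.logb s ((cycleFix n s f).card : ℝ) ≤
      entH n s (cycleFix n s f) (d 1) (d 2) +
        ∑ i ∈ Finset.Icc 2 (k - 1), entH n s (cycleFix n s f) (d i + 1) (d (i + 1)) := by
  classical
  set F := cycleFix n s f with hFdef
  set a : ℕ → ℤ := fun i => if i = 1 then 1 else d i + 1 with ha
  have ha1 : a 1 = 1 := by simp [ha]
  have ha2 : ∀ i, i ≠ 1 → a i = d i + 1 := fun i hi => by simp [ha, hi]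
  have hlen : ∀ i, 1 ≤ i → i < k → a i + 1 ≤ d (i + 1) := fun i h1 h2 => by
    have := hstep i h1 h2
    by_cases h : i = 1
    · subst h; rw [ha1]; omega
    · rw [ha2 i h]; omega
  have hcov : ∀ m : ℕ, 1 ≤ m → m < k → ∀ x : ℤ, 1 ≤ x → x ≤ d (m + 1) →
      ∃ i, 1 ≤ i ∧ i < k ∧ a i ≤ x ∧ x ≤ d (i + 1) := by
    intro m hm
    induction m, hm using Nat.le_induction with
    | base => exact fun h x hx hx' => ⟨1, le_rfl, h, by rw [ha1]; exact hx, hx'⟩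
    | succ m hm ih =>
      intro h x hx hx'
      by_cases hc : x ≤ d (m + 1)
      · exact ih (by omega) x hx hc
      · exact ⟨m + 1, by omega, h, by rw [ha2 _ (by omega)]; omega, hx'⟩
  have hk1 : k - 1 + 1 = k := by omega
  have hcov' : ∀ z : ZMod n, ∃ x : ℤ, (x : ZMod n) = z ∧
      ∃ i, 1 ≤ i ∧ i < k ∧ a i ≤ x ∧ x ≤ d (i + 1) := by
    intro z
    have hz := ZMod.val_lt (z - 1)
    refine ⟨((z - 1).val : ℤ) + 1, by simp, ?_⟩
    refine hcov (k - 1) (by omega) (by omega) _ (by omega) ?_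
    rw [hk1, hdk]; omega
  have hfix : ∀ c ∈ F, ∀ c' ∈ F, ∀ z : ZMod n, c (z - 1) = c' (z - 1) →
      c (z + 1) = c' (z + 1) → c z = c' z := by
    intro c hc c' hc' z h1 h2
    rw [hFdef, cycleFix, Finset.mem_filter] at hc hc'
    rw [hc.2 z, hc'.2 z, h1, h2]
  have hA : Real.logb s (F.card : ℝ) ≤
      ∑ i ∈ Finset.Icc 1 (k - 1), entT n s F (Finset.Icc (a i) (d (i + 1) - 1)) := by
    refine sum_entT_ge n s hs F hne _ _ fun c hc c' hc' h => ?_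
    have h' : ∀ i, 1 ≤ i → i < k → ∀ x, a i ≤ x → x ≤ d (i + 1) - 1 →
        c (x : ZMod n) = c' (x : ZMod n) := fun i h1 h2 x h3 h4 =>
      h i (Finset.mem_Icc.2 ⟨h1, by omega⟩) x (Finset.mem_Icc.2 ⟨h3, h4⟩)
    funext z
    obtain ⟨x, rfl, i, h1, h2, h3, h4⟩ := hcov' z
    by_cases hx : x = d (i + 1)
    · have hl := hlen i h1 h2
      refine hfix c hc c' hc' _ ?_ ?_
      · have := h' i h1 h2 (x - 1) (by omega) (by omega)
        simpa using this
      · by_cases hik : i + 1 = k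
        · have := h' 1 le_rfl (by omega) 1 (by omega) (by have := hlen 1 le_rfl (by omega); omega)
          rw [hx, hik, hdk]
          simpa using this
        · have hl2 := hlen (i + 1) (by omega) (by omega)
          rw [ha2 _ (by omega)] at hl2
          have := h' (i + 1) (by omega) (by omega) (x + 1)
            (by rw [ha2 _ (by omega)]; omega) (by omega)
          simpa using this
    · exact h' i h1 h2 x h3 (by omega)
  have hB : Real.logb s (F.card : ℝ) ≤
      ∑ i ∈ Finset.Icc 1 (k - 1), entT n s F (Finset.Icc (a i + 1) (d (i + 1))) := by
    refine sum_entT_ge n s hs F hne _ _ fun c hc c' hc' h => ?_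
    have h' : ∀ i, 1 ≤ i → i < k → ∀ x, a i + 1 ≤ x → x ≤ d (i + 1) →
        c (x : ZMod n) = c' (x : ZMod n) := fun i h1 h2 x h3 h4 =>
      h i (Finset.mem_Icc.2 ⟨h1, by omega⟩) x (Finset.mem_Icc.2 ⟨h3, h4⟩)
    funext z
    obtain ⟨x, rfl, i, h1, h2, h3, h4⟩ := hcov' z
    by_cases hx : x = a i
    · have hl := hlen i h1 h2
      refine hfix c hc c' hc' _ ?_ ?_
      · by_cases hi1 : i = 1
        · have hl2 := hlen (k - 1) (by omega) (by omega)
          rw [hk1] at hl2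
          have := h' (k - 1) (by omega) (by omega) n (by omega) (by rw [hk1]; omega)
          rw [hx, hi1, ha1]
          simpa using this
        · obtain ⟨j, rfl⟩ : ∃ j, i = j + 1 := ⟨i - 1, by omega⟩
          have hl2 := hlen j (by omega) (by omega)
          rw [ha2 _ hi1] at hx
          have := h' j (by omega) (by omega) (x - 1) (by omega) (by omega)
          simpa using this
      · have := h' i h1 h2 (x + 1) (by omega) (by omega)
        simpa using this
    · exact h' i h1 h2 x (by omega) h4
  have hsplit : entH n s F (d 1) (d 2) +
      ∑ i ∈ Finset.Icc 2 (k - 1), entH n s F (d i + 1) (d (i + 1)) =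
      ∑ i ∈ Finset.Icc 1 (k - 1), entH n s F (a i) (d (i + 1)) := by
    rw [← Finset.add_sum_Ioc_eq_sum_Icc (by omega : 1 ≤ k - 1), ha1, hd1]
    congr 1
    refine Finset.sum_congr (by ext; simp; omega) fun i hi => ?_
    rw [ha2 i (by have := (Finset.mem_Ioc.1 hi).1; omega)]
  rw [hsplit]
  simp only [entH]
  rw [Finset.sum_add_distrib]
  linarith
end

section
/- Let n ≥ 3 be an odd integer, let s ≥ 2 be an integer, let a be the greatest divisor of s with a ≤ √s and let b = s/a. Then the fractional-clique-partition protocol P_fcp on C_n with s colours satisfies fix(P_fcp) = a · s^{(n−1)/2}. -/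
open Finset

/-- First coordinate `φ(z)` of a colour under the bijection `π : Z_a × Z_b ≃ Z_s`. -/
def fcpPhi {a b s : ℕ} (π : ZMod a × ZMod b ≃ Fin s) (z : Fin s) : ZMod a :=
  (π.symm z).1

/-- Second coordinate `ψ(z)` of a colour under the bijection `π : Z_a × Z_b ≃ Z_s`. -/
def fcpPsi {a b s : ℕ} (π : ZMod a × ZMod b ≃ Fin s) (z : Fin s) : ZMod b :=
  (π.symm z).2

/-- The fractional-clique-partition protocol `P_fcp` on `C_n` (`n` odd), for a
factorisation `s = a·b` with `a ≤ b` and a bijection `π : Z_a × Z_b ≃ Z_s`.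
Vertices are the residues modulo `n`, vertex `i` of the paper corresponding to the
residue of `i` (so vertex `n` is the residue `0`).  The first argument of `f i` is
the colour of vertex `i - 1` and the second the colour of vertex `i + 1`:
* `f 1 (c_n, c_2)   = π(φ(c_2), φ(c_n))` (regarding `Z_a ⊆ Z_b` via `val`),
* `f n (c_{n-1}, c_1) = π(ψ(c_1) mod a, ψ(c_{n-1}))`,
* `f i (c_{i-1}, c_{i+1}) = π(φ(c_{i-1}), ψ(c_{i+1}))` for even `i`, `2 ≤ i ≤ n-1`,
* `f i (c_{i-1}, c_{i+1}) = π(φ(c_{i+1}), ψ(c_{i-1}))` for odd `i`, `3 ≤ i ≤ n-2`. -/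
def fcpProtocol (n s a b : ℕ) [NeZero n] (π : ZMod a × ZMod b ≃ Fin s) :
    ZMod n → Fin s × Fin s → Fin s := fun i p =>
  if i.val = 1 then π (fcpPhi π p.2, (((fcpPhi π p.1).val : ℕ) : ZMod b))
  else if i.val = 0 then π ((((fcpPsi π p.2).val : ℕ) : ZMod a), fcpPsi π p.1)
  else if i.val % 2 = 0 then π (fcpPhi π p.1, fcpPsi π p.2)
  else π (fcpPhi π p.2, fcpPsi π p.1)


lemma fcp_fix_iff (m s a b : ℕ) (hm : 1 ≤ m) [NeZero (2*m+1)] (π : ZMod a × ZMod b ≃ Fin s)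
    (c : ZMod (2*m+1) → Fin s) (C : ℕ → Fin s) (hC : ∀ k : ℕ, C k = c (k : ZMod (2*m+1))) :
    c ∈ cycleFix (2*m+1) s (fcpProtocol (2*m+1) s a b π) ↔
      C 1 = π (fcpPhi π (C 2), (((fcpPhi π (C 0)).val : ℕ) : ZMod b)) ∧
      C 0 = π ((((fcpPsi π (C 1)).val : ℕ) : ZMod a), fcpPsi π (C (2*m))) ∧
      (∀ k, k < m → C (2*k+2) = π (fcpPhi π (C (2*k+1)), fcpPsi π (C (2*k+3)))) ∧
      (∀ k, k + 1 < m → C (2*k+3) = π (fcpPhi π (C (2*k+4)), fcpPsi π (C (2*k+2)))) := by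
  have key : c ∈ cycleFix (2*m+1) s (fcpProtocol (2*m+1) s a b π) ↔
      ∀ k : ℕ, k < 2*m+1 → C k = fcpProtocol (2*m+1) s a b π (k : ZMod (2*m+1))
        (C (k + 2*m), C (k+1)) := by
    have e : ((2*m : ℕ) : ZMod (2*m+1)) = -1 := by
      have := ZMod.natCast_self (2*m+1)
      push_cast at this ⊢
      linear_combination this
    simp only [cycleFix, Finset.mem_filter, Finset.mem_univ, true_and]
    constructor
    · intro h k _
      have := h (k : ZMod (2*m+1))
      rw [hC, hC, hC, this, Nat.cast_add k (2*m), e, Nat.cast_add k 1, Nat.cast_one,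
        sub_eq_add_neg]
    · intro h i
      have := h i.val (ZMod.val_lt i)
      rw [hC, hC, hC, Nat.cast_add _ (2*m), e, Nat.cast_add _ 1, Nat.cast_one,
        ← sub_eq_add_neg, ZMod.natCast_zmod_val] at this
      exact this
  have per : ∀ k, C (k + (2*m+1)) = C k := by
    intro k
    rw [hC, hC, Nat.cast_add, ZMod.natCast_self, add_zero]
  have v : ∀ k : ℕ, k < 2*m+1 → (k : ZMod (2*m+1)).val = k := fun k hk => ZMod.val_cast_of_lt hk
  have p1 : ∀ k, C (k + 1 + 2*m) = C k := by
    intro k; rw [← per k]; congr 1; ring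
  rw [key]
  constructor
  · intro h
    refine ⟨?_, ?_, ?_, ?_⟩
    · have := h 1 (by omega)
      simpa [fcpProtocol, -Nat.cast_one, -Nat.cast_ofNat, v 1 (by omega), p1 0, show 1 + 2*m = 0+1+2*m by ring] using this
    · have := h 0 (by omega)
      simpa [fcpProtocol] using this
    · intro k hk
      have := h (2*k+2) (by omega)
      rw [show 2*k+2+2*m = 2*k+1+1+2*m by ring, p1] at this
      unfold fcpProtocol at this
      rw [v _ (by omega), if_neg (by omega), if_neg (by omega), if_pos (by omega)] at this
      exact this
    · intro k hk
      have := h (2*k+3) (by omega)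
      rw [show 2*k+3+2*m = 2*k+2+1+2*m by ring, p1] at this
      unfold fcpProtocol at this
      rw [v _ (by omega), if_neg (by omega), if_neg (by omega), if_neg (by omega)] at this
      exact this
  · rintro ⟨h1, h0, he, ho⟩ k hk
    unfold fcpProtocol
    rw [v _ hk]
    rcases k with _ | k
    · simpa using h0
    rw [p1]
    rcases k with _ | k
    · simpa using h1
    rw [if_neg (by omega), if_neg (by omega)]
    obtain ⟨j, rfl | rfl⟩ : ∃ j, k = 2*j ∨ k = 2*j+1 := ⟨k/2, by omega⟩
    · rw [if_pos (by omega)]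
      exact he j (by omega)
    · rw [if_neg (by omega)]
      exact ho j (by omega)

/-- inverse map -/
def fcpG {a b s : ℕ} (m : ℕ) (π : ZMod a × ZMod b ≃ Fin s) (x : ZMod a) (D : ℕ → Fin s) :
    ℕ → Fin s
  | 0 => π (x, fcpPsi π (D (m-1)))
  | 1 => π (fcpPhi π (D 0), ((x.val : ℕ) : ZMod b))
  | (k+2) => if k % 2 = 0 then D (k/2) else π (fcpPhi π (D (k/2+1)), fcpPsi π (D (k/2)))

theorem fcp_count (m s a b : ℕ) (hm : 1 ≤ m) [NeZero (2*m+1)] [NeZero a] (hs : 0 < s) (hab : a ≤ b)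
    (π : ZMod a × ZMod b ≃ Fin s) :
    (cycleFix (2*m+1) s (fcpProtocol (2*m+1) s a b π)).card = a * s ^ m := by
  have hcard : (Finset.univ : Finset (ZMod a × (Fin m → Fin s))).card = a * s ^ m := by
    simp [ZMod.card]
  rw [← hcard]
  have hb : NeZero b := ⟨by have := NeZero.ne a; omega⟩
  have ph : ∀ p, fcpPhi π (π p) = p.1 := by intro p; simp [fcpPhi]
  have ps : ∀ p, fcpPsi π (π p) = p.2 := by intro p; simp [fcpPsi]
  have et : ∀ z, π (fcpPhi π z, fcpPsi π z) = z := by intro z; simp [fcpPhi, fcpPsi]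
  have vv : ∀ x : ZMod a, ((((x.val : ℕ) : ZMod b).val : ℕ) : ZMod a) = x := by
    intro x
    rw [ZMod.val_cast_of_lt (lt_of_lt_of_le (ZMod.val_lt x) hab), ZMod.natCast_zmod_val]
  let ext : (Fin m → Fin s) → ℕ → Fin s := fun d k => if h : k < m then d ⟨k, h⟩ else ⟨0, hs⟩
  have per : ∀ c : ZMod (2*m+1) → Fin s, c ((2*m+1 : ℕ) : ZMod (2*m+1)) = c ((0:ℕ) : ZMod (2*m+1)) := by
    intro c; rw [ZMod.natCast_self, Nat.cast_zero]
  have v : ∀ k : ℕ, k < 2*m+1 → (k : ZMod (2*m+1)).val = k := fun k hk => ZMod.val_cast_of_lt hk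
  refine Finset.card_nbij' (fun c => (fcpPhi π (c ((0:ℕ) : ZMod (2*m+1))), fun k : Fin m => c ((2*k.1+2 : ℕ) : ZMod (2*m+1))))
    (fun p i => fcpG m π p.1 (ext p.2) i.val) ?_ ?_ ?_ ?_
  · intro c _; simp
  · rintro ⟨x, d⟩ _
    rw [Finset.mem_coe, fcp_fix_iff m s a b hm π _ (fun k => fcpG m π x (ext d) (k : ZMod (2*m+1)).val) (fun k => rfl)]
    generalize ext d = D
    have ev : ∀ k, k < m → fcpG m π x D ((2*k+2 : ℕ) : ZMod (2*m+1)).val = D k := by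
      intro k hk
      rw [v _ (by omega)]
      simp [fcpG]
    have od : ∀ k, k + 1 < m → fcpG m π x D ((2*k+3 : ℕ) : ZMod (2*m+1)).val
        = π (fcpPhi π (D (k+1)), fcpPsi π (D k)) := by
      intro k hk
      rw [v _ (by omega)]
      have h1 : (2*k+1)/2 = k := by omega
      simp [fcpG, h1]
    have g0 : fcpG m π x D ((0 : ℕ) : ZMod (2*m+1)).val = π (x, fcpPsi π (D (m-1))) := by
      rw [v _ (by omega)]; rfl
    have g1 : fcpG m π x D ((1 : ℕ) : ZMod (2*m+1)).val
        = π (fcpPhi π (D 0), ((x.val : ℕ) : ZMod b)) := by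
      rw [v _ (by omega)]; rfl
    have ev0 := ev 0 hm
    refine ⟨?_, ?_, ?_, ?_⟩
    · simp only [g1, g0, ph]
      rw [show (2:ℕ) = 2*0+2 from rfl, ev0]
    · have := ev (m-1) (by omega)
      rw [show 2*(m-1)+2 = 2*m by omega] at this
      simp only [g1, g0, ps, this, vv]
    · intro k hk
      have e1 : fcpPhi π (fcpG m π x D ((2*k+1 : ℕ) : ZMod (2*m+1)).val) = fcpPhi π (D k) := by
        rcases k with _ | k
        · simp only [Nat.mul_zero, Nat.zero_add, g1, ph]
        · rw [show 2*(k+1)+1 = 2*k+3 by ring, od k hk, ph]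
      have e2 : fcpPsi π (fcpG m π x D ((2*k+3 : ℕ) : ZMod (2*m+1)).val) = fcpPsi π (D k) := by
        by_cases h : k + 1 < m
        · rw [od k h, ps]
        · obtain rfl : m = k+1 := by omega
          have : ((2*k+3 : ℕ) : ZMod (2*(k+1)+1)) = ((0:ℕ) : ZMod (2*(k+1)+1)) := by
            rw [show 2*k+3 = 2*(k+1)+1 by ring, ZMod.natCast_self, Nat.cast_zero]
          rw [this, g0, ps]; rfl
      simp only [e1, e2, et, ev k hk]
    · intro k hk
      have := ev (k+1) hk
      rw [show 2*(k+1)+2 = 2*k+4 by ring] at this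
      simp only [od k hk, this, ev k (by omega)]
  · intro c hc
    rw [Finset.mem_coe, fcp_fix_iff m s a b hm π c (fun k => c (k : ZMod (2*m+1))) (fun k => rfl)] at hc
    obtain ⟨h1, h0, he, ho⟩ := hc
    have hD : ∀ k, k < m → ext (fun k : Fin m => c ((2*k.1+2 : ℕ) : ZMod (2*m+1))) k
        = c ((2*k+2 : ℕ) : ZMod (2*m+1)) := by
      intro k hk; simp only [ext, dif_pos hk]
    dsimp only
    generalize ext (fun k : Fin m => c ((2*k.1+2 : ℕ) : ZMod (2*m+1))) = D at hD
    funext i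
    have hi := ZMod.val_lt i
    conv_rhs => rw [← ZMod.natCast_zmod_val i]
    generalize i.val = k at hi
    rcases k with _ | _ | k
    · have := hD (m-1) (by omega)
      rw [show 2*(m-1)+2 = 2*m by omega] at this
      simp only [fcpG, this]
      conv_rhs => rw [← et (c ((0:ℕ) : ZMod (2*m+1)))]
      congr 2
      rw [h0, ps]
    · have := hD 0 (by omega)
      simp only [fcpG, this]
      exact h1.symm
    · obtain ⟨j, rfl | rfl⟩ : ∃ j, k = 2*j ∨ k = 2*j+1 := ⟨k/2, by omega⟩
      · simp only [fcpG]
        rw [if_pos (by omega), show 2*j/2 = j by omega, hD j (by omega)]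
      · simp only [fcpG]
        rw [if_neg (by omega), show (2*j+1)/2 = j by omega, hD j (by omega), hD (j+1) (by omega)]
        exact (ho j (by omega)).symm
  · rintro ⟨x, d⟩ _
    ext1
    · dsimp only
      rw [v _ (by omega)]
      simp only [fcpG, ph]
    · funext k
      have := k.2
      dsimp only
      rw [v _ (by omega)]
      simp [fcpG, ext]

/-- Let `n ≥ 3` be odd, `s ≥ 2`, let `a` be the greatest divisor of
`s` with `a ≤ √s` (equivalently `a ∣ s`, `a² ≤ s`, and every divisor `d` of `s` with
`d² ≤ s` satisfies `d ≤ a`) and `b = s / a`.  Then for any bijection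
`π : Z_a × Z_b ≃ Z_s`, the fractional-clique-partition protocol satisfies
`fix(P_fcp) = a · s^{(n-1)/2}`. -/
theorem cycle_guessing_stmt5 (n s a : ℕ) [NeZero n] (hn : 3 ≤ n) (hodd : Odd n)
    (hs : 2 ≤ s)
    (ha : a ∣ s ∧ a * a ≤ s ∧ ∀ d : ℕ, d ∣ s → d * d ≤ s → d ≤ a)
    (π : ZMod a × ZMod (s / a) ≃ Fin s) :
    (cycleFix n s (fcpProtocol n s a (s / a) π)).card = a * s ^ ((n - 1) / 2) := by
  obtain ⟨h1, h2, h3⟩ := ha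
  have ha1 : 1 ≤ a := h3 1 (one_dvd s) (by omega)
  have : NeZero a := ⟨by omega⟩
  obtain ⟨m, rfl⟩ := hodd
  rw [show (2*m+1-1)/2 = m by omega]
  exact fcp_count m s a (s/a) (by omega) (by omega) ((Nat.le_div_iff_mul_le ha1).2 h2) π
end

section
/- Let n ≥ 4 and s ≥ 2 be integers. Every protocol P on C_n with s colours satisfies fix(P)^2 ≤ s^n (equivalently, the guessing number gn(C_n, s) ≤ n/2). Moreover, if a non-trivial protocol P attains fix(P)^2 = s^n and X is uniformly distributed on Fix(P), then each coordinate X_i is uniformly distributed on Z_s (i.e. H(X_i) = 1 in base-s entropy for all i). -/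
open Finset

namespace CG

section
variable {V A : Type} [Fintype V] [DecidableEq V] [DecidableEq A]

/-- agreement class size -/
def cls (F : Finset (V → A)) (S : Finset V) (c : V → A) : ℕ :=
  (F.filter fun d => ∀ i ∈ S, d i = c i).card

noncomputable def ent (F : Finset (V → A)) (S : Finset V) : ℝ :=
  ∑ c ∈ F, (Real.log F.card - Real.log (cls F S c))

lemma cls_pos {F : Finset (V → A)} (S : Finset V) {c : V → A} (hc : c ∈ F) : 0 < cls F S c :=
  Finset.card_pos.2 ⟨c, by simp [hc]⟩

lemma ent_mono {F : Finset (V → A)} {S T : Finset V}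
    (h : ∀ c ∈ F, ∀ d ∈ F, (∀ i ∈ S, d i = c i) → ∀ i ∈ T, d i = c i) :
    ent F T ≤ ent F S := by
  refine Finset.sum_le_sum fun c hc => ?_
  have h1 : cls F S c ≤ cls F T c := by
    refine Finset.card_le_card fun d hd => ?_
    simp only [Finset.mem_filter] at hd ⊢
    exact ⟨hd.1, h c hc d hd.1 hd.2⟩
  have h2 : (0:ℝ) < cls F S c := by exact_mod_cast cls_pos S hc
  have := Real.log_le_log h2 (by exact_mod_cast h1 : (cls F S c : ℝ) ≤ cls F T c)
  linarith

lemma ent_empty (F : Finset (V → A)) : ent F ∅ = 0 := by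
  simp [ent, cls]

lemma ent_univ (F : Finset (V → A)) : ent F Finset.univ = F.card * Real.log F.card := by
  unfold ent
  rw [Finset.sum_congr rfl (g := fun _ => Real.log F.card), Finset.sum_const, nsmul_eq_mul]
  intro c hc
  have : cls F Finset.univ c = 1 := by
    unfold cls
    rw [Finset.card_eq_one]
    refine ⟨c, ?_⟩
    ext d
    simp only [Finset.mem_filter, Finset.mem_univ, true_imp_iff, Finset.mem_singleton]
    constructor
    · rintro ⟨_, h⟩; exact funext h
    · rintro rfl; exact ⟨hc, fun _ => rfl⟩
  rw [this]; simp

lemma cls_congr {F : Finset (V → A)} {S : Finset V} {c d : V → A}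
    (h : ∀ i ∈ S, d i = c i) : cls F S d = cls F S c := by
  unfold cls
  congr 1
  apply Finset.filter_congr
  intro e _
  constructor
  · intro h' i hi; rw [h' i hi, h i hi]
  · intro h' i hi; rw [h' i hi, h i hi]

lemma key_sum (F : Finset (V → A)) {S T U : Finset V} (hS : U ⊆ S) (hT : U ⊆ T) :
    ∑ c ∈ F, ((cls F S c : ℝ) * cls F T c / (cls F (S ∪ T) c * cls F U c)) ≤ F.card := by
  have e1 : ∀ c ∈ F, ((cls F S c : ℝ) * cls F T c / (cls F (S ∪ T) c * cls F U c)) =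
      ∑ d ∈ F, ∑ e ∈ F, if (∀ i ∈ S, d i = c i) ∧ (∀ i ∈ T, e i = c i) then
        ((cls F (S ∪ T) c : ℝ) * cls F U c)⁻¹ else 0 := by
    intro c _
    have a1 : (cls F S c : ℝ) = ∑ d ∈ F, if (∀ i ∈ S, d i = c i) then (1:ℝ) else 0 := by
      simp [cls]
    have a2 : (cls F T c : ℝ) = ∑ d ∈ F, if (∀ i ∈ T, d i = c i) then (1:ℝ) else 0 := by
      simp [cls]
    rw [div_eq_mul_inv, a1, a2, Finset.sum_mul_sum, Finset.sum_mul]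
    refine Finset.sum_congr rfl fun d _ => ?_
    rw [Finset.sum_mul]
    refine Finset.sum_congr rfl fun e _ => ?_
    by_cases h1 : ∀ i ∈ S, d i = c i
    · by_cases h2 : ∀ i ∈ T, e i = c i
      · rw [if_pos h1, if_pos h2, if_pos ⟨h1, h2⟩, one_mul, one_mul]
      · rw [if_neg h2, if_neg (fun h : _ ∧ _ => h2 h.2), mul_zero, zero_mul]
    · rw [if_neg h1, if_neg (fun h : _ ∧ _ => h1 h.1), zero_mul, zero_mul]
  rw [Finset.sum_congr rfl e1, Finset.sum_comm]
  have e2 : ∀ d ∈ F, (∑ c ∈ F, ∑ e ∈ F, if (∀ i ∈ S, d i = c i) ∧ (∀ i ∈ T, e i = c i) then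
        ((cls F (S ∪ T) c : ℝ) * cls F U c)⁻¹ else 0) ≤ 1 := by
    intro d hd
    rw [Finset.sum_comm]
    have e3 : ∀ e ∈ F, (∑ c ∈ F, if (∀ i ∈ S, d i = c i) ∧ (∀ i ∈ T, e i = c i) then
        ((cls F (S ∪ T) c : ℝ) * cls F U c)⁻¹ else 0) ≤
        if (∀ i ∈ U, e i = d i) then (cls F U d : ℝ)⁻¹ else 0 := by
      intro e he
      by_cases hex : ∃ c ∈ F, (∀ i ∈ S, d i = c i) ∧ (∀ i ∈ T, e i = c i)
      · obtain ⟨c0, hc0, h1, h2⟩ := hex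
        have hU : ∀ i ∈ U, e i = d i := fun i hi => by rw [h2 i (hT hi), h1 i (hS hi)]
        rw [if_pos hU, ← Finset.sum_filter]
        have hfil : (F.filter fun c => (∀ i ∈ S, d i = c i) ∧ (∀ i ∈ T, e i = c i)) =
            F.filter fun c => ∀ i ∈ S ∪ T, c i = c0 i := by
          apply Finset.filter_congr
          intro c _
          simp only [Finset.mem_union]
          constructor
          · rintro ⟨g1, g2⟩ i (hi | hi)
            · rw [← g1 i hi, h1 i hi]
            · rw [← g2 i hi, h2 i hi]
          · intro g
            exact ⟨fun i hi => by rw [g i (Or.inl hi), h1 i hi],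
              fun i hi => by rw [g i (Or.inr hi), h2 i hi]⟩
        rw [hfil, Finset.sum_congr rfl (g := fun _ =>
          ((cls F (S ∪ T) c0 : ℝ) * cls F U d)⁻¹)]
        · rw [Finset.sum_const, nsmul_eq_mul]
          have p : (0:ℝ) < cls F (S ∪ T) c0 := by exact_mod_cast cls_pos _ hc0
          change (cls F (S ∪ T) c0 : ℝ) * _ ≤ _
          rw [mul_inv, ← mul_assoc, mul_inv_cancel₀ p.ne', one_mul]
        · intro c hc
          have hc' := (Finset.mem_filter.1 hc).2
          rw [cls_congr hc']
          have : cls F U c = cls F U d := cls_congr fun i hi => by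
            rw [hc' i (Finset.mem_union_left _ (hS hi)), h1 i (hS hi)]
          rw [this]
      · rw [Finset.sum_eq_zero]
        · split_ifs <;> positivity
        · intro c hc
          rw [if_neg]
          exact fun h => hex ⟨c, hc, h⟩
    refine (Finset.sum_le_sum e3).trans ?_
    rw [← Finset.sum_filter, Finset.sum_const, nsmul_eq_mul]
    change (cls F U d : ℝ) * _ ≤ _
    exact mul_inv_le_one
  refine le_trans (le_of_eq ?_) ((Finset.sum_le_sum e2).trans (by simp))
  rfl

lemma ent_submod (F : Finset (V → A)) {S T U : Finset V} (hS : U ⊆ S) (hT : U ⊆ T) :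
    ent F (S ∪ T) + ent F U ≤ ent F S + ent F T := by
  have h := key_sum F hS hT
  have h2 : ∑ c ∈ F, (Real.log (cls F S c) + Real.log (cls F T c)
      - Real.log (cls F (S ∪ T) c) - Real.log (cls F U c)) ≤
      ∑ c ∈ F, ((cls F S c : ℝ) * cls F T c / (cls F (S ∪ T) c * cls F U c) - 1) := by
    refine Finset.sum_le_sum fun c hc => ?_
    have p1 : (0:ℝ) < cls F S c := by exact_mod_cast cls_pos _ hc
    have p2 : (0:ℝ) < cls F T c := by exact_mod_cast cls_pos _ hc
    have p3 : (0:ℝ) < cls F (S ∪ T) c := by exact_mod_cast cls_pos _ hc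
    have p4 : (0:ℝ) < cls F U c := by exact_mod_cast cls_pos _ hc
    have := Real.log_le_sub_one_of_pos
      (show (0:ℝ) < (cls F S c : ℝ) * cls F T c / (cls F (S ∪ T) c * cls F U c) by positivity)
    rw [Real.log_div (by positivity) (by positivity), Real.log_mul p1.ne' p2.ne',
      Real.log_mul p3.ne' p4.ne'] at this
    linarith
  unfold ent
  simp only [Finset.sum_sub_distrib, Finset.sum_add_distrib, Finset.sum_const, nsmul_eq_mul,
    mul_one] at h2 ⊢
  linarith

lemma ent_subadd (F : Finset (V → A)) (S T : Finset V) :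
    ent F (S ∪ T) ≤ ent F S + ent F T := by
  have := ent_submod F (Finset.empty_subset S) (Finset.empty_subset T)
  rw [ent_empty] at this
  linarith

lemma cls_single (F : Finset (V → A)) (i : V) (c : V → A) :
    cls F {i} c = (F.filter fun d => d i = c i).card := by
  simp [cls]

lemma sum_inv [Fintype A] (F : Finset (V → A)) (i : V) :
    ∑ c ∈ F, ((cls F {i} c : ℝ))⁻¹ ≤ Fintype.card A := by
  rw [← Finset.sum_fiberwise F (fun c => c i)]
  refine (Finset.sum_le_sum (g := fun _ => (1:ℝ)) fun z _ => ?_).trans (by simp)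
  rw [Finset.sum_congr rfl (g := fun _ => ((F.filter fun d => d i = z).card : ℝ)⁻¹)]
  · rw [Finset.sum_const, nsmul_eq_mul]; exact mul_inv_le_one
  · intro c hc
    rw [cls_single, (Finset.mem_filter.1 hc).2]

lemma ent_single_aux [Fintype A] [Nonempty A] (F : Finset (V → A)) (i : V) :
    ∑ c ∈ F, ((F.card : ℝ) / (Fintype.card A * cls F {i} c) - 1) ≤ 0 := by
  have h := sum_inv F i
  have hs : (0:ℝ) < Fintype.card A := by exact_mod_cast Fintype.card_pos
  rw [Finset.sum_sub_distrib]
  have : ∑ c ∈ F, ((F.card : ℝ) / (Fintype.card A * cls F {i} c)) =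
      (F.card : ℝ) / Fintype.card A * ∑ c ∈ F, ((cls F {i} c : ℝ))⁻¹ := by
    rw [Finset.mul_sum]
    refine Finset.sum_congr rfl fun c _ => ?_
    rw [div_eq_mul_inv, div_eq_mul_inv, mul_inv, mul_assoc]
  rw [this]
  simp only [Finset.sum_const, nsmul_eq_mul, mul_one]
  have h3 := mul_le_mul_of_nonneg_left h (show (0:ℝ) ≤ (F.card : ℝ) / Fintype.card A by positivity)
  rw [div_mul_cancel₀ _ hs.ne'] at h3
  linarith

lemma term_le [Fintype A] [Nonempty A] {F : Finset (V → A)} (i : V) {c : V → A} (hc : c ∈ F) :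
    Real.log F.card - Real.log (cls F {i} c) - Real.log (Fintype.card A) ≤
      (F.card : ℝ) / (Fintype.card A * cls F {i} c) - 1 ∧
    (Real.log F.card - Real.log (cls F {i} c) - Real.log (Fintype.card A) =
      (F.card : ℝ) / (Fintype.card A * cls F {i} c) - 1 →
      (F.card : ℝ) = (Fintype.card A * cls F {i} c)) := by
  have hs : (0:ℝ) < Fintype.card A := by exact_mod_cast Fintype.card_pos
  have p1 : (0:ℝ) < cls F {i} c := by exact_mod_cast cls_pos _ hc
  have p2 : (0:ℝ) < F.card := by exact_mod_cast Finset.card_pos.2 ⟨c, hc⟩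
  have pp : (0:ℝ) < (F.card : ℝ) / (Fintype.card A * cls F {i} c) := by positivity
  have e : Real.log ((F.card : ℝ) / (Fintype.card A * cls F {i} c)) =
      Real.log F.card - Real.log (cls F {i} c) - Real.log (Fintype.card A) := by
    rw [Real.log_div (by positivity) (by positivity), Real.log_mul hs.ne' p1.ne']; ring
  rw [← e]
  refine ⟨Real.log_le_sub_one_of_pos pp, fun h => ?_⟩
  by_contra hne
  have := Real.log_lt_sub_one_of_pos pp (fun h1 => hne ((div_eq_one_iff_eq (by positivity)).1 h1))
  linarith

lemma ent_single_le [Fintype A] [Nonempty A] (F : Finset (V → A)) (i : V) :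
    ent F {i} ≤ F.card * Real.log (Fintype.card A) := by
  have h := (Finset.sum_le_sum fun c hc => (term_le (F := F) i hc).1).trans (ent_single_aux F i)
  rw [Finset.sum_sub_distrib] at h
  simp only [Finset.sum_const, nsmul_eq_mul] at h
  unfold ent; linarith

lemma ent_single_eq [Fintype A] [Nonempty A] {F : Finset (V → A)} (i : V)
    (hF : F.Nonempty)
    (h : ent F {i} = F.card * Real.log (Fintype.card A)) (z : A) :
    (F.card : ℝ) = Fintype.card A * (F.filter fun d => d i = z).card := by
  have h0 := ent_single_aux F i
  have h1 : ∑ c ∈ F, (Real.log F.card - Real.log (cls F {i} c) - Real.log (Fintype.card A)) = 0 := by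
    rw [Finset.sum_sub_distrib]
    simp only [Finset.sum_const, nsmul_eq_mul]
    unfold ent at h; linarith
  have h2 := Finset.sum_le_sum fun c hc => (term_le (F := F) i hc).1
  have h3 := (Finset.sum_eq_sum_iff_of_le fun c hc => (term_le (F := F) i hc).1).1
    (le_antisymm h2 (by linarith))
  have h4 : ∀ c ∈ F, (F.card : ℝ) = Fintype.card A * (F.filter fun d => d i = c i).card := by
    intro c hc
    rw [← cls_single]; exact (term_le i hc).2 (h3 c hc)
  have h5 : ∀ w : A, (Fintype.card A : ℝ) * (F.filter fun d => d i = w).card ≤ F.card := by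
    intro w
    by_cases hw : ∃ c ∈ F, c i = w
    · obtain ⟨c, hc, rfl⟩ := hw; exact (h4 c hc).ge
    · rw [Finset.filter_eq_empty_iff.2]
      · simp
      · intro c hc hcw; exact hw ⟨c, hc, hcw⟩
  have h6 : ∑ w : A, (Fintype.card A : ℝ) * (F.filter fun d => d i = w).card =
      ∑ w : A, (F.card : ℝ) := by
    rw [← Finset.mul_sum, ← Nat.cast_sum,
      ← Finset.card_eq_sum_card_fiberwise (fun c _ => Finset.mem_coe.2 (Finset.mem_univ _))]
    simp
  exact ((Finset.sum_eq_sum_iff_of_le fun w _ => h5 w).1 h6 z (Finset.mem_univ z)).symm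

end

section cyc
variable {n s : ℕ} [NeZero n]

def J (n a b : ℕ) : Finset (ZMod n) := (Finset.Ico a b).image (fun k : ℕ => (k : ZMod n))

lemma mem_J {a b : ℕ} {x : ZMod n} : x ∈ J n a b ↔ ∃ k, a ≤ k ∧ k < b ∧ (k : ZMod n) = x := by
  simp [J, and_assoc]

lemma agree {f : ZMod n → Fin s × Fin s → Fin s} {c d : ZMod n → Fin s}
    (hc : c ∈ cycleFix n s f) (hd : d ∈ cycleFix n s f) (k : ℕ)
    (h1 : d (k : ℕ) = c (k : ℕ)) (h2 : d ((k + 2 : ℕ)) = c ((k + 2 : ℕ))) :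
    d ((k + 1 : ℕ)) = c ((k + 1 : ℕ)) := by
  simp only [cycleFix, Finset.mem_filter, Finset.mem_univ, true_and] at hc hd
  rw [hc, hd]
  have e1 : (((k + 1 : ℕ) : ZMod n) - 1) = (k : ℕ) := by push_cast; ring
  have e2 : (((k + 1 : ℕ) : ZMod n) + 1) = (k + 2 : ℕ) := by push_cast; ring
  rw [e1, e2, h1, h2]

lemma peel (f : ZMod n → Fin s × Fin s → Fin s) (m : ℕ) : ∀ a : ℕ,
    ent (cycleFix n s f) (J n a (a + 2 * m + 1)) +
      ent (cycleFix n s f) (J n (a + 1) (a + 2 * m + 2)) ≤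
    ∑ k ∈ Finset.Ico a (a + 2 * m + 2), ent (cycleFix n s f) {(k : ZMod n)} := by
  induction m with
  | zero =>
    intro a
    have : ∀ a : ℕ, J n a (a + 1) = {(a : ZMod n)} := by intro a; simp [J]
    have h2 : Finset.Ico a (a + 2) = {a, a + 1} := by ext; simp; omega
    simp only [mul_zero, add_zero]
    rw [h2, Finset.sum_pair (by omega), this, this]
  | succ m ih =>
    intro a
    have h := ih (a + 1)
    have r1 : ent (cycleFix n s f) (J n a (a + 2 * (m + 1) + 1)) ≤
        ent (cycleFix n s f) ({(a : ZMod n)} ∪ J n (a + 2) (a + 2 * m + 3)) := by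
      apply ent_mono
      intro c hc d hd h x hx
      obtain ⟨k, hk1, hk2, rfl⟩ := mem_J.1 hx
      have g1 : d a = c a := h _ (by simp)
      have g2 : ∀ k, a + 2 ≤ k → k < a + 2 * m + 3 → d (k : ℕ) = c (k : ℕ) := fun k h1 h2 =>
        h _ (Finset.mem_union_right _ (mem_J.2 ⟨k, h1, h2, rfl⟩))
      rcases (by omega : k = a ∨ k = a + 1 ∨ a + 2 ≤ k) with rfl | rfl | h'
      · exact g1
      · exact agree hc hd a g1 (g2 _ le_rfl (by omega))
      · exact g2 _ h' (by omega)
    have r2 : ent (cycleFix n s f) (J n (a + 1) (a + 2 * (m + 1) + 2)) ≤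
        ent (cycleFix n s f) (J n (a + 1) (a + 2 * m + 2) ∪ {((a + 2 * m + 3 : ℕ) : ZMod n)}) := by
      apply ent_mono
      intro c hc d hd h x hx
      obtain ⟨k, hk1, hk2, rfl⟩ := mem_J.1 hx
      have g1 : d (a + 2 * m + 3 : ℕ) = c (a + 2 * m + 3 : ℕ) :=
        h _ (Finset.mem_union_right _ (Finset.mem_singleton_self _))
      have g2 : ∀ k, a + 1 ≤ k → k < a + 2 * m + 2 → d (k : ℕ) = c (k : ℕ) := fun k h1 h2 =>
        h _ (Finset.mem_union_left _ (mem_J.2 ⟨k, h1, h2, rfl⟩))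
      rcases (by omega : k = a + 2 * m + 3 ∨ k = a + 2 * m + 2 ∨ k < a + 2 * m + 2)
        with rfl | rfl | h'
      · exact g1
      · exact agree hc hd (a + 2 * m + 1) (g2 _ (by omega) (by omega)) g1
      · exact g2 _ (by omega) h'
    have r1' := r1.trans (ent_subadd _ _ _)
    have r2' := r2.trans (ent_subadd _ _ _)
    have e1 : a + 1 + 2 * m + 1 = a + 2 * m + 2 := by ring
    have e2 : a + 1 + 2 * m + 2 = a + 2 * m + 3 := by ring
    have e3 : a + 2 * (m + 1) + 2 = (a + 2 * m + 3) + 1 := by ring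
    rw [e1, e2] at h
    rw [e3, Finset.sum_Ico_succ_top (by omega), Finset.sum_eq_sum_Ico_succ_bot (by omega)]
    rw [e3] at r2'
    linarith

lemma ent_det {f : ZMod n → Fin s × Fin s → Fin s} {S : Finset (ZMod n)}
    (h : ∀ c ∈ cycleFix n s f, ∀ d ∈ cycleFix n s f, (∀ i ∈ S, d i = c i) →
      ∀ k < n, d (k : ℕ) = c (k : ℕ)) :
    ((cycleFix n s f).card : ℝ) * Real.log (cycleFix n s f).card ≤ ent (cycleFix n s f) S := by
  rw [← ent_univ]
  apply ent_mono
  intro c hc d hd h' i _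
  have := h c hc d hd h' i.val (ZMod.val_lt i)
  rwa [ZMod.natCast_zmod_val] at this

lemma main_ineq (hn : 4 ≤ n) (f : ZMod n → Fin s × Fin s → Fin s) :
    2 * (((cycleFix n s f).card : ℝ) * Real.log (cycleFix n s f).card) ≤
      ∑ i : ZMod n, ent (cycleFix n s f) {i} := by
  have hsum : ∑ i : ZMod n, ent (cycleFix n s f) {i} =
      ∑ k ∈ Finset.Ico 0 n, ent (cycleFix n s f) {(k : ZMod n)} := by
    symm
    refine Finset.sum_bij' (fun k _ => (k : ZMod n)) (fun i _ => i.val) ?_ ?_ ?_ ?_ ?_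
    · simp
    · intro i _; simp [ZMod.val_lt]
    · intro k hk; exact ZMod.val_cast_of_lt (Finset.mem_Ico.1 hk).2
    · intro i _; simp
    · intro k _; rfl
  rw [hsum]
  have w0 : ((n : ℕ) : ZMod n) = ((0 : ℕ) : ZMod n) := by simp
  rcases Nat.even_or_odd' n with ⟨m, hm | hm⟩
  · obtain ⟨m, rfl⟩ : ∃ q, m = q + 1 := ⟨m - 1, by omega⟩
    have h := peel f m 0
    have hn2 : 0 + 2 * m + 2 = n := by omega
    have hn1 : 0 + 2 * m + 1 = n - 1 := by omega
    rw [hn1, hn2] at h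
    have r1 := ent_det (f := f) (S := J n 0 (n - 1)) (by
      intro c hc d hd h k hk
      have g : ∀ k, k < n - 1 → d (k : ℕ) = c (k : ℕ) := fun k h2 =>
        h _ (mem_J.2 ⟨k, Nat.zero_le _, h2, rfl⟩)
      rcases (by omega : k < n - 1 ∨ k = (n - 2) + 1) with h' | rfl
      · exact g k h'
      · apply agree hc hd (n - 2) (g _ (by omega))
        rw [show n - 2 + 2 = n by omega, w0]
        exact g 0 (by omega))
    have r2 := ent_det (f := f) (S := J n (0 + 1) n) (by
      intro c hc d hd h k hk
      have g : ∀ k, 1 ≤ k → k < n → d (k : ℕ) = c (k : ℕ) := fun k h1 h2 =>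
        h _ (mem_J.2 ⟨k, h1, h2, rfl⟩)
      rcases (by omega : 1 ≤ k ∨ k = 0) with h' | rfl
      · exact g k h' hk
      · rw [← w0]
        have := agree hc hd (n - 1) (g _ (by omega) (by omega)) (by
          have e : ((n - 1 + 2 : ℕ) : ZMod n) = ((1 : ℕ) : ZMod n) := by
            rw [show n - 1 + 2 = n + 1 by omega]; simp
          rw [e]; exact g 1 le_rfl (by omega))
        rwa [show n - 1 + 1 = n by omega] at this)
    linarith
  · obtain ⟨m, rfl⟩ : ∃ q, m = q + 1 := ⟨m - 1, by omega⟩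
    have h := peel f m 0
    have hn2 : 0 + 2 * m + 2 = n - 1 := by omega
    have hn1 : 0 + 2 * m + 1 = n - 2 := by omega
    rw [hn1, hn2] at h
    have hsub := ent_submod (cycleFix n s f) (S := J n 0 (n - 2)) (T := J n (0 + 1) (n - 1))
      (U := J n 1 (n - 2))
      (Finset.image_subset_image (Finset.Ico_subset_Ico (by omega) (by omega)))
      (Finset.image_subset_image (Finset.Ico_subset_Ico (by omega) (by omega)))
    have r1 := ent_det (f := f) (S := J n 0 (n - 2) ∪ J n (0 + 1) (n - 1)) (by
      intro c hc d hd h k hk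
      have g : ∀ k, k < n - 1 → d (k : ℕ) = c (k : ℕ) := fun k h2 => by
        apply h
        rcases Nat.eq_zero_or_pos k with h0 | h0
        · exact Finset.mem_union_left _ (mem_J.2 ⟨k, by omega, by omega, rfl⟩)
        · exact Finset.mem_union_right _ (mem_J.2 ⟨k, by omega, by omega, rfl⟩)
      rcases (by omega : k < n - 1 ∨ k = (n - 2) + 1) with h' | rfl
      · exact g k h'
      · apply agree hc hd (n - 2) (g _ (by omega))
        rw [show n - 2 + 2 = n by omega, w0]
        exact g 0 (by omega))
    have r2 := ent_det (f := f) (S := J n 1 (n - 2) ∪ {((n - 1 : ℕ) : ZMod n)}) (by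
      intro c hc d hd h k hk
      have g : ∀ k, 1 ≤ k → k < n - 2 → d (k : ℕ) = c (k : ℕ) := fun k h1 h2 =>
        h _ (Finset.mem_union_left _ (mem_J.2 ⟨k, h1, h2, rfl⟩))
      have g1 : d (n - 1 : ℕ) = c (n - 1 : ℕ) :=
        h _ (Finset.mem_union_right _ (Finset.mem_singleton_self _))
      rcases (by omega : (1 ≤ k ∧ k < n - 2) ∨ k = 0 ∨ k = n - 1 ∨ k = (n - 3) + 1)
        with h' | rfl | rfl | rfl
      · exact g k h'.1 h'.2
      · rw [← w0]
        have := agree hc hd (n - 1) g1 (by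
          have e : ((n - 1 + 2 : ℕ) : ZMod n) = ((1 : ℕ) : ZMod n) := by
            rw [show n - 1 + 2 = n + 1 by omega]; simp
          rw [e]; exact g 1 le_rfl (by omega))
        rwa [show n - 1 + 1 = n by omega] at this
      · exact g1
      · apply agree hc hd (n - 3) (g _ (by omega) (by omega))
        rw [show n - 3 + 2 = n - 1 by omega]
        exact g1)
    have r2' := r2.trans (ent_subadd _ _ _)
    have e : Finset.Ico 0 n = Finset.Ico 0 ((n - 1) + 1) := by
      rw [show n - 1 + 1 = n by omega]
    rw [e, Finset.sum_Ico_succ_top (by omega)]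
    linarith

end cyc

end CG

/-- Let `n ≥ 4` and `s ≥ 2`.  Every protocol `P` on `C_n` with `s`
colours satisfies `fix(P)² ≤ sⁿ` (equivalently `gn(C_n,s) ≤ n/2`).  Moreover, if a
non-trivial protocol attains `fix(P)² = sⁿ` and `X` is uniform on `Fix(P)`, then
every coordinate `X_i` is uniformly distributed on `Z_s`, i.e. `H(X_i) = 1` in
base-`s` entropy for all `i`. -/
theorem cycle_guessing_stmt6 (n s : ℕ) [NeZero n] (hn : 4 ≤ n) (hs : 2 ≤ s) :
    (∀ f : ZMod n → Fin s × Fin s → Fin s, (cycleFix n s f).card ^ 2 ≤ s ^ n) ∧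
      ∀ f : ZMod n → Fin s × Fin s → Fin s, (cycleFix n s f).Nonempty →
        (cycleFix n s f).card ^ 2 = s ^ n →
        ∀ i : ZMod n,
          (∀ z : Fin s,
            (((cycleFix n s f).filter fun c => c i = z).card : ℝ) /
                ((cycleFix n s f).card : ℝ) = 1 / s) ∧
          entOf s (cycleFix n s f) (fun c => c i) = 1 := by
  have hs0 : (0:ℝ) < s := by exact_mod_cast (by omega : 0 < s)
  have hs1 : (1:ℝ) < s := by exact_mod_cast (by omega : 1 < s)
  haveI : NeZero s := ⟨by omega⟩
  have hle : ∀ (f : ZMod n → Fin s × Fin s → Fin s) (i : ZMod n),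
      CG.ent (cycleFix n s f) {i} ≤ (cycleFix n s f).card * Real.log s := by
    intro f i
    have := CG.ent_single_le (cycleFix n s f) i
    rwa [Fintype.card_fin] at this
  refine ⟨fun f => ?_, fun f hne heq i => ?_⟩
  · rcases Nat.eq_zero_or_pos (cycleFix n s f).card with h0 | h0
    · rw [h0]; simp
    · have hN : (0:ℝ) < (cycleFix n s f).card := by exact_mod_cast h0
      have h := (CG.main_ineq hn f).trans (Finset.sum_le_sum fun i _ => hle f i)
      simp only [Finset.sum_const, Finset.card_univ, ZMod.card, nsmul_eq_mul] at h
      have h' : 2 * Real.log (cycleFix n s f).card ≤ n * Real.log s := by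
        refine le_of_mul_le_mul_left ?_ hN
        linarith
      have h2 : Real.log (((cycleFix n s f).card : ℝ) ^ 2) ≤ Real.log ((s : ℝ) ^ n) := by
        rw [Real.log_pow, Real.log_pow]; exact_mod_cast h'
      have h3 := (Real.log_le_log_iff (by positivity) (by positivity)).1 h2
      exact_mod_cast h3
  · have hN : (0:ℝ) < (cycleFix n s f).card := by exact_mod_cast Finset.card_pos.2 hne
    have h1 : 2 * Real.log (cycleFix n s f).card = n * Real.log s := by
      have : Real.log (((cycleFix n s f).card : ℝ) ^ 2) = Real.log ((s : ℝ) ^ n) := by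
        congr 1; exact_mod_cast heq
      rw [Real.log_pow, Real.log_pow] at this; exact_mod_cast this
    have h2 := CG.main_ineq hn f
    have h3 : ∑ i : ZMod n, ((cycleFix n s f).card : ℝ) * Real.log s =
        2 * (((cycleFix n s f).card : ℝ) * Real.log (cycleFix n s f).card) := by
      simp only [Finset.sum_const, Finset.card_univ, ZMod.card, nsmul_eq_mul]
      linear_combination -((cycleFix n s f).card : ℝ) * h1
    have h4 := (Finset.sum_eq_sum_iff_of_le fun i _ => hle f i).1
      (le_antisymm (Finset.sum_le_sum fun i _ => hle f i) (by linarith)) i (Finset.mem_univ i)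
    have h5 : ∀ z : Fin s, (((cycleFix n s f).filter fun c => c i = z).card : ℝ) /
                ((cycleFix n s f).card : ℝ) = 1 / s := by
      intro z
      have := CG.ent_single_eq i hne (by rw [Fintype.card_fin]; exact h4) z
      rw [Fintype.card_fin] at this
      rw [div_eq_div_iff hN.ne' hs0.ne']
      linarith
    refine ⟨h5, ?_⟩
    unfold entOf
    simp only [h5]
    rw [Finset.sum_const, Finset.card_univ, Fintype.card_fin, nsmul_eq_mul, one_div,
      Real.logb_inv, Real.logb_self_eq_one hs1]
    field_simp
end

section
/- Let n be an odd integer, n ≥ 3, and suppose s = m^2 − t ≥ 2 for integers m ≥ 1 and t ≥ 0. Then there exists a protocol P on C_n with s colours such that fix(P) ≥ s^{n/2} · (1 − t·n/s). -/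
open Finset

lemma cyc_bad_card (n s m t : ℕ) [NeZero n] (hst : s + t = m ^ 2)
    (e : Fin s ↪ Fin m × Fin m) (i j : ZMod n) (hij : i ≠ j) :
    (Finset.univ.filter fun x : ZMod n → Fin m => (x i, x j) ∉ Set.range e).card * m ^ 2
      ≤ t * m ^ n := by
  classical
  have hR : (Finset.univ.filter fun p : Fin m × Fin m => p ∉ Set.range e).card = t := by
    have h1 : (Finset.univ.filter fun p : Fin m × Fin m => p ∉ Set.range e)
        = (Finset.univ.map e)ᶜ := by
      ext p; simp
    rw [h1, Finset.card_compl]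
    simp only [Fintype.card_prod, Fintype.card_fin, Finset.card_map, Finset.card_univ]
    have : m * m = m ^ 2 := by ring
    omega
  have hall : (Finset.univ : Finset (ZMod n → Fin m)).card = m ^ n := by
    simp [ZMod.card]
  have hp : (Finset.univ : Finset (Fin m × Fin m)).card = m ^ 2 := by
    simp [sq]
  rw [← hR, ← hall, ← hp, ← Finset.card_product, ← Finset.card_product]
  apply Finset.card_le_card_of_injOn
    (fun z => ((z.1 i, z.1 j), Function.update (Function.update z.1 i z.2.1) j z.2.2))
  · rintro ⟨x, p, q⟩ h
    simpa using h
  · rintro ⟨x, p, q⟩ - ⟨y, p', q'⟩ - h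
    simp only [Prod.mk.injEq] at h
    obtain ⟨⟨h1, h2⟩, h3⟩ := h
    have hq := congrFun h3 j
    have hpp := congrFun h3 i
    simp only [Function.update_self, Function.update_of_ne hij] at hq hpp
    have hx : x = y := by
      funext k
      by_cases hki : k = i
      · rw [hki, h1]
      by_cases hkj : k = j
      · rw [hkj, h2]
      have := congrFun h3 k
      simpa [Function.update_of_ne hki, Function.update_of_ne hkj] using this
    simp [hx, hq, hpp]

/-- Let `n ≥ 3` be odd and suppose `s = m² − t ≥ 2` for integers
`m ≥ 1` and `t ≥ 0` (expressed as `s + t = m²`).  Then there exists a protocol `P`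
on `C_n` with `s` colours such that `fix(P) ≥ s^{n/2} · (1 − t·n/s)`, where
`s^{n/2}` denotes the real power. -/
theorem cycle_guessing_stmt7 (n s m t : ℕ) [NeZero n] (hn : 3 ≤ n) (hodd : Odd n)
    (hm : 1 ≤ m) (hst : s + t = m ^ 2) (hs : 2 ≤ s) :
    ∃ f : ZMod n → Fin s × Fin s → Fin s,
      ((cycleFix n s f).card : ℝ) ≥
        (s : ℝ) ^ ((n : ℝ) / 2) * (1 - (t : ℝ) * (n : ℝ) / (s : ℝ)) := by
  classical
  have hcard : Fintype.card (Fin s) ≤ Fintype.card (Fin m × Fin m) := by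
    simp only [Fintype.card_prod, Fintype.card_fin]
    have : m * m = m ^ 2 := by ring
    omega
  obtain ⟨e⟩ := Function.Embedding.nonempty_of_card_le hcard
  have : Nonempty (Fin s) := ⟨⟨0, by omega⟩⟩
  have h1n : ∀ i : ZMod n, i ≠ i + 1 := by
    intro i h
    have : Fact (1 < n) := ⟨by omega⟩
    exact one_ne_zero (left_eq_add.mp h)
  refine ⟨fun _ p => Function.invFun e ((e p.1).2, (e p.2).1), ?_⟩
  set F := cycleFix n s (fun _ p => Function.invFun e ((e p.1).2, (e p.2).1)) with hF
  set B : ZMod n → Finset (ZMod n → Fin m) := fun i =>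
    Finset.univ.filter fun x => (x i, x (i + 1)) ∉ Set.range e with hB
  have hinv : ∀ p, p ∈ Set.range e → e (Function.invFun e p) = p := fun p hp =>
    Function.invFun_eq hp
  have hG : ((Finset.univ.biUnion B)ᶜ).card ≤ F.card := by
    have hmem : ∀ x, x ∈ (Finset.univ.biUnion B)ᶜ → ∀ i, (x i, x (i + 1)) ∈ Set.range e := by
      intro x hx i
      by_contra hc
      rw [Finset.mem_compl, Finset.mem_biUnion] at hx
      exact hx ⟨i, Finset.mem_univ _, Finset.mem_filter.mpr ⟨Finset.mem_univ _, hc⟩⟩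
    apply Finset.card_le_card_of_injOn (fun x i => Function.invFun e (x i, x (i + 1)))
    · intro x hx
      have hx' := hmem x hx
      rw [hF]
      simp only [cycleFix, Finset.coe_filter, Finset.mem_univ, true_and, Set.mem_setOf_eq]
      intro i
      rw [hinv _ (hx' (i - 1)), hinv _ (hx' (i + 1))]
      simp
    · intro x hx y hy h
      funext i
      have h2 := congrArg e (congrFun h i)
      simp only [hinv _ (hmem x hx i), hinv _ (hmem y hy i)] at h2
      exact (Prod.mk.inj h2).1
  have hU : (Finset.univ.biUnion B).card * m ^ 2 ≤ n * (t * m ^ n) := by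
    calc (Finset.univ.biUnion B).card * m ^ 2 ≤ (∑ i, (B i).card) * m ^ 2 :=
          Nat.mul_le_mul_right _ Finset.card_biUnion_le
      _ = ∑ i, (B i).card * m ^ 2 := by rw [Finset.sum_mul]
      _ ≤ ∑ _i : ZMod n, t * m ^ n :=
          Finset.sum_le_sum fun i _ => cyc_bad_card n s m t hst e i (i + 1) (h1n i)
      _ = n * (t * m ^ n) := by simp [ZMod.card]
  have hsum : (Finset.univ.biUnion B).card + ((Finset.univ.biUnion B)ᶜ).card = m ^ n := by
    rw [Finset.card_add_card_compl]; simp [ZMod.card]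
  generalize (Finset.univ.biUnion B).card = b at hU hsum
  have hk : m ^ n ≤ b + F.card := by omega
  have hkR : (m : ℝ) ^ n ≤ b + F.card := by exact_mod_cast hk
  have hUR : (b : ℝ) * m ^ 2 ≤ n * (t * m ^ n) := by exact_mod_cast hU
  have hstR : (s : ℝ) + t = m ^ 2 := by exact_mod_cast hst
  have hs0 : (0 : ℝ) < s := by exact_mod_cast (by omega : 0 < s)
  have ht0 : (0 : ℝ) ≤ t := Nat.cast_nonneg _
  have hn0 : (0 : ℝ) ≤ n := Nat.cast_nonneg _
  have hm0 : (0 : ℝ) < m := by exact_mod_cast hm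
  by_cases hneg : 1 - (t : ℝ) * n / s ≤ 0
  · have : (s : ℝ) ^ ((n : ℝ) / 2) * (1 - (t : ℝ) * n / s) ≤ 0 :=
      mul_nonpos_of_nonneg_of_nonpos (by positivity) hneg
    exact this.trans (Nat.cast_nonneg _)
  · push Not at hneg
    have hpow : (s : ℝ) ^ ((n : ℝ) / 2) ≤ (m : ℝ) ^ n := by
      calc (s : ℝ) ^ ((n : ℝ) / 2) ≤ ((m : ℝ) ^ 2) ^ ((n : ℝ) / 2) :=
            Real.rpow_le_rpow hs0.le (by linarith) (by positivity)
        _ = (m : ℝ) ^ n := by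
            rw [← Real.rpow_natCast (m : ℝ) 2, ← Real.rpow_mul hm0.le,
              ← Real.rpow_natCast (m : ℝ) n]
            congr 1
            push_cast; ring
    have hb : (b : ℝ) ≤ m ^ n * (t * n / s) := by
      have h1 : (b : ℝ) ≤ m ^ n * (t * n / m ^ 2) := by
        rw [← mul_div_assoc, le_div_iff₀ (by positivity)]
        linarith
      refine h1.trans ?_
      gcongr
      linarith
    calc (s : ℝ) ^ ((n : ℝ) / 2) * (1 - (t : ℝ) * n / s)
        ≤ (m : ℝ) ^ n * (1 - (t : ℝ) * n / s) := mul_le_mul_of_nonneg_right hpow hneg.le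
      _ ≤ F.card := by linarith
end

section
/- For every integer s ≥ 2 there exists a constant ε > 0 with the following property. Let δ₁ = (1/2) · min{ I(U_1; U_2 | f(U)) : f : Z_s × Z_s → Z_s is flat but not semi-perfect }, where U = (U_1, U_2) is uniformly distributed on Z_s × Z_s; this set of functions is non-empty (e.g. f(x,y) = x + y mod s), so δ₁ is well-defined and δ₁ > 0. Then for any function f : Z_s × Z_s → Z_s that is not semi-perfect and any three (s, ε)-uniform random variables Y_1, Y_2, Y_3 with values in Z_s satisfying Y_2 = f(Y_1, Y_3), if the pair (Y_1, Y_3) is (s², ε)-uniform, then I(Y_1; Y_3 | Y_2) ≥ δ₁. -/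
open Finset


/-- Base-`s` Shannon entropy of `g(U)` where `U` is distributed on the finite type
`α` with probability mass function `q`. -/
noncomputable def pEnt (s : ℕ) {α β : Type} [Fintype α] [DecidableEq β] [Fintype β]
    (q : α → ℝ) (g : α → β) : ℝ :=
  -∑ y : β, (∑ x ∈ Finset.univ.filter fun x => g x = y, q x) *
      Real.logb s (∑ x ∈ Finset.univ.filter fun x => g x = y, q x)

/-- The conditional mutual information `I(U₁; U₂ | f(U))` (base `s`), where the pair
`U = (U₁, U₂)` has joint probability mass function `q` on `Z_s × Z_s`, computed via
`I(A;B|C) = H(A,C) + H(B,C) − H(A,B,C) − H(C)`. -/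
noncomputable def condMI (s : ℕ) (f : Fin s × Fin s → Fin s)
    (q : Fin s × Fin s → ℝ) : ℝ :=
  pEnt s q (fun u => (u.1, f u)) + pEnt s q (fun u => (u.2, f u))
    - pEnt s q (fun u => (u.1, u.2, f u)) - pEnt s q f

/-- The uniform probability mass function on `Z_s × Z_s`. -/
noncomputable def unifPair (s : ℕ) : Fin s × Fin s → ℝ := fun _ => 1 / (s ^ 2 : ℝ)

/-- A function `f : Z_s × Z_s → Z_s` is flat if every fibre has exactly `s` elements. -/
def IsFlat (s : ℕ) (f : Fin s × Fin s → Fin s) : Prop :=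
  ∀ z : Fin s, (Finset.univ.filter fun u => f u = z).card = s

/-- A function `f : Z_s × Z_s → Z_s` is semi-perfect if it is flat and, for
`U = (U₁,U₂)` uniform on `Z_s × Z_s`, `I(U₁; U₂ | f(U)) = 0`. -/
def IsSemiPerfect (s : ℕ) (f : Fin s × Fin s → Fin s) : Prop :=
  IsFlat s f ∧ condMI s f (unifPair s) = 0

/-- `δ₁(s) = (1/2)·min { I(U₁;U₂|f(U)) : f flat but not semi-perfect }`, where `U` is
uniform on `Z_s × Z_s`. -/
noncomputable def delta1 (s : ℕ) : ℝ :=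
  (1 / 2) * sInf {x : ℝ | ∃ f : Fin s × Fin s → Fin s,
    IsFlat s f ∧ ¬ IsSemiPerfect s f ∧ x = condMI s f (unifPair s)}


lemma aux_pEnt_eq (s : ℕ) {α β : Type} [Fintype α] [DecidableEq β] [Fintype β]
    (q : α → ℝ) (g : α → β) :
    pEnt s q g = -∑ u, q u * Real.logb s (∑ x ∈ Finset.univ.filter fun x => g x = g u, q x) := by
  unfold pEnt
  rw [← Finset.sum_fiberwise (s := univ) (g := g)
    (f := fun u => q u * Real.logb s (∑ x ∈ Finset.univ.filter fun x => g x = g u, q x))]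
  congr 1
  refine Finset.sum_congr rfl fun y _ => ?_
  rw [Finset.sum_mul]
  refine Finset.sum_congr rfl fun u hu => ?_
  simp only [Finset.mem_filter, Finset.mem_univ, true_and] at hu
  rw [hu]

lemma aux_pEnt_inj (s : ℕ) {α β : Type} [Fintype α] [DecidableEq α] [DecidableEq β] [Fintype β]
    (q : α → ℝ) (g : α → β) (hg : Function.Injective g) :
    pEnt s q g = -∑ u, q u * Real.logb s (q u) := by
  rw [aux_pEnt_eq]
  congr 1
  refine Finset.sum_congr rfl fun u _ => ?_
  have : (Finset.univ.filter fun x => g x = g u) = {u} := by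
    ext x; simp [hg.eq_iff]
  rw [this, Finset.sum_singleton]

lemma aux_cont (s : ℕ) {α β : Type} [Fintype α] [DecidableEq β] [Fintype β] (g : α → β) :
    Continuous (fun q : α → ℝ => pEnt s q g) := by
  unfold pEnt
  refine (continuous_finset_sum _ fun y _ => ?_).neg
  have h : Continuous (fun q : α → ℝ => ∑ x ∈ Finset.univ.filter fun x => g x = y, q x) := by
    fun_prop
  have h2 := (Real.continuous_mul_log.comp h).div_const (Real.log s)
  refine h2.congr fun q => ?_
  simp only [Function.comp, Real.logb]
  ring

lemma aux_contMI (s : ℕ) (f : Fin s × Fin s → Fin s) : Continuous (condMI s f) := by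
  unfold condMI
  exact (((aux_cont s _).add (aux_cont s _)).sub (aux_cont s _)).sub (aux_cont s _)

lemma aux_nonneg (s : ℕ) (hs : 2 ≤ s) (f : Fin s × Fin s → Fin s) (q : Fin s × Fin s → ℝ)
    (hq : ∀ u, 0 < q u) : 0 ≤ condMI s f q := by
  unfold condMI
  rw [aux_pEnt_inj s q (fun u => (u.1, u.2, f u))
    (by rintro ⟨a, b⟩ ⟨c, d⟩ h; simp only [Prod.mk.injEq] at h ⊢; exact ⟨h.1, h.2.1⟩)]
  rw [aux_pEnt_eq, aux_pEnt_eq, aux_pEnt_eq]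
  set A : Fin s → Fin s → ℝ := fun x z => ∑ u ∈ univ.filter (fun u => (u.1, f u) = (x, z)), q u with hA
  set B : Fin s → Fin s → ℝ := fun x z => ∑ u ∈ univ.filter (fun u => (u.2, f u) = (x, z)), q u with hB
  set C : Fin s → ℝ := fun z => ∑ u ∈ univ.filter (fun u => f u = z), q u with hC
  have hA0 : ∀ x z, 0 ≤ A x z := fun x z => Finset.sum_nonneg fun u _ => (hq u).le
  have hB0 : ∀ x z, 0 ≤ B x z := fun x z => Finset.sum_nonneg fun u _ => (hq u).le
  have hC0 : ∀ z, 0 ≤ C z := fun z => Finset.sum_nonneg fun u _ => (hq u).le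
  have hAp : ∀ u, 0 < A u.1 (f u) := fun u =>
    Finset.sum_pos (fun u _ => hq u) ⟨u, by simp⟩
  have hBp : ∀ u, 0 < B u.2 (f u) := fun u =>
    Finset.sum_pos (fun u _ => hq u) ⟨u, by simp⟩
  have hCp : ∀ u, 0 < C (f u) := fun u =>
    Finset.sum_pos (fun u _ => hq u) ⟨u, by simp⟩
  have hAs : ∀ z, ∑ x, A x z = C z := by
    intro z
    simp only [hA, hC]
    rw [← Finset.sum_fiberwise (s := univ.filter (fun u => f u = z)) (g := Prod.fst)]
    refine Finset.sum_congr rfl fun x _ => ?_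
    rw [Finset.filter_filter]
    refine Finset.sum_congr ?_ fun _ _ => rfl
    ext u; simp [and_comm]
  have hBs : ∀ z, ∑ x, B x z = C z := by
    intro z
    simp only [hB, hC]
    rw [← Finset.sum_fiberwise (s := univ.filter (fun u => f u = z)) (g := Prod.snd)]
    refine Finset.sum_congr rfl fun x _ => ?_
    rw [Finset.filter_filter]
    refine Finset.sum_congr ?_ fun _ _ => rfl
    ext u; simp [and_comm]
  have hCs : ∑ z, C z = ∑ u, q u := by
    simp only [hC]
    exact Finset.sum_fiberwise _ _ _
  have hl : 0 < Real.log s := Real.log_pos (by exact_mod_cast hs)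
  have key : ∀ u, q u - A u.1 (f u) * B u.2 (f u) / C (f u) ≤
      q u * (Real.log (q u) + Real.log (C (f u)) - Real.log (A u.1 (f u))
        - Real.log (B u.2 (f u))) := by
    intro u
    have h1 := Real.log_le_sub_one_of_pos
      (div_pos (mul_pos (hAp u) (hBp u)) (mul_pos (hq u) (hCp u)))
    rw [Real.log_div (mul_pos (hAp u) (hBp u)).ne' (mul_pos (hq u) (hCp u)).ne',
      Real.log_mul (hAp u).ne' (hBp u).ne', Real.log_mul (hq u).ne' (hCp u).ne'] at h1
    have h2 := mul_le_mul_of_nonneg_left h1 (hq u).le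
    have h3 : q u * (A u.1 (f u) * B u.2 (f u) / (q u * C (f u)) - 1)
        = A u.1 (f u) * B u.2 (f u) / C (f u) - q u := by
      have := (hq u).ne'
      have := (hCp u).ne'
      field_simp
    rw [h3] at h2
    linarith
  have hbound : ∑ u : Fin s × Fin s, A u.1 (f u) * B u.2 (f u) / C (f u) ≤ ∑ u, q u := by
    calc ∑ u : Fin s × Fin s, A u.1 (f u) * B u.2 (f u) / C (f u)
        ≤ ∑ u : Fin s × Fin s, ∑ z, A u.1 z * B u.2 z / C z := by
          refine Finset.sum_le_sum fun u _ => ?_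
          exact Finset.single_le_sum (f := fun z => A u.1 z * B u.2 z / C z)
            (fun z _ => div_nonneg (mul_nonneg (hA0 _ _) (hB0 _ _)) (hC0 _)) (mem_univ _)
      _ = ∑ z, C z := by
          rw [Finset.sum_comm]
          refine Finset.sum_congr rfl fun z _ => ?_
          rw [← Finset.sum_div, Fintype.sum_prod_type]
          simp only
          simp_rw [← Finset.mul_sum]
          rw [← Finset.sum_mul, hAs, hBs]
          exact mul_self_div_self _
      _ = _ := hCs
  have hsum := Finset.sum_le_sum (s := univ) fun u _ => key u
  rw [Finset.sum_sub_distrib] at hsum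
  have h0 : 0 ≤ ∑ u, q u * (Real.log (q u) + Real.log (C (f u)) - Real.log (A u.1 (f u))
        - Real.log (B u.2 (f u))) := by linarith
  have : -∑ u, q u * Real.logb s (A u.1 (f u)) + -∑ u, q u * Real.logb s (B u.2 (f u))
      - -∑ u, q u * Real.logb s (q u) - -∑ u, q u * Real.logb s (C (f u))
      = (∑ u, q u * (Real.log (q u) + Real.log (C (f u)) - Real.log (A u.1 (f u))
        - Real.log (B u.2 (f u)))) / Real.log s := by
    rw [Finset.sum_div, ← Finset.sum_neg_distrib, ← Finset.sum_neg_distrib,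
      ← Finset.sum_neg_distrib, ← Finset.sum_neg_distrib, ← Finset.sum_add_distrib,
      ← Finset.sum_sub_distrib, ← Finset.sum_sub_distrib]
    refine Finset.sum_congr rfl fun u _ => ?_
    simp only [Real.logb]
    ring
  change 0 ≤ -∑ u, q u * Real.logb s (A u.1 (f u)) + -∑ u, q u * Real.logb s (B u.2 (f u))
      - -∑ u, q u * Real.logb s (q u) - -∑ u, q u * Real.logb s (C (f u))
  rw [this]
  exact div_nonneg h0 hl.le

lemma aux_ent_unif_inj (s : ℕ) (hs : 2 ≤ s) {β : Type} [DecidableEq β] [Fintype β]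
    (g : Fin s × Fin s → β) (hg : Function.Injective g) : pEnt s (unifPair s) g = 2 := by
  rw [aux_pEnt_inj _ _ _ hg]
  have h1 : (1:ℝ) < s := by exact_mod_cast hs
  have hs0 : (s:ℝ) ≠ 0 := by positivity
  have hl : Real.log s ≠ 0 := (Real.log_pos h1).ne'
  simp only [unifPair, Finset.sum_const, Finset.card_univ, Fintype.card_prod, Fintype.card_fin,
    nsmul_eq_mul, Real.logb, one_div, Real.log_inv, Real.log_pow]
  push_cast
  field_simp

lemma aux_ent_flat (s : ℕ) (hs : 2 ≤ s) (f : Fin s × Fin s → Fin s) (hf : IsFlat s f) :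
    pEnt s (unifPair s) f = 1 := by
  have h1 : (1:ℝ) < s := by exact_mod_cast hs
  have hs0 : (s:ℝ) ≠ 0 := by positivity
  have hl : Real.log s ≠ 0 := (Real.log_pos h1).ne'
  unfold pEnt
  have h : ∀ z, ∑ x ∈ univ.filter (fun x => f x = z), unifPair s x = (s:ℝ)⁻¹ := by
    intro z
    simp only [unifPair, Finset.sum_const, hf z, nsmul_eq_mul]
    field_simp
  simp only [h, Finset.sum_const, Finset.card_univ, Fintype.card_fin, nsmul_eq_mul, Real.logb,
    Real.log_inv]
  field_simp

lemma aux_nonempty (s : ℕ) (hs : 2 ≤ s) : ∃ f : Fin s × Fin s → Fin s,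
    IsFlat s f ∧ ¬ IsSemiPerfect s f := by
  haveI : NeZero s := ⟨by omega⟩
  have hflat : IsFlat s (fun u : Fin s × Fin s => u.1 + u.2) := by
    intro z
    have : (univ.filter fun u : Fin s × Fin s => u.1 + u.2 = z)
        = univ.image (fun x : Fin s => (x, z - x)) := by
      ext ⟨a, b⟩
      simp only [mem_filter, mem_univ, true_and, mem_image, Prod.mk.injEq]
      constructor
      · rintro rfl; exact ⟨a, rfl, by abel⟩
      · rintro ⟨x, rfl, rfl⟩; abel
    rw [this, Finset.card_image_of_injective]
    · simp
    · intro a b h; exact (Prod.mk.inj h).1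
  refine ⟨_, hflat, fun h => ?_⟩
  have h2 := h.2
  unfold condMI at h2
  rw [aux_ent_flat s hs _ hflat, aux_ent_unif_inj s hs, aux_ent_unif_inj s hs,
    aux_ent_unif_inj s hs] at h2
  · norm_num at h2
  · rintro ⟨a, b⟩ ⟨c, d⟩ h; simp only [Prod.mk.injEq] at h ⊢; exact ⟨h.1, h.2.1⟩
  · rintro ⟨a, b⟩ ⟨c, d⟩ h
    simp only [Prod.mk.injEq] at h ⊢
    obtain ⟨rfl, h⟩ := h
    exact ⟨add_right_cancel h, rfl⟩
  · rintro ⟨a, b⟩ ⟨c, d⟩ h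
    simp only [Prod.mk.injEq] at h ⊢
    obtain ⟨rfl, h⟩ := h
    exact ⟨rfl, add_left_cancel h⟩

/-- For every integer `s ≥ 2` there is a constant `ε > 0` with the
following property.  The set of values `I(U₁;U₂|f(U))` over flat but not semi-perfect
`f` is non-empty, so `δ₁ = δ₁(s)` is well-defined, and `δ₁ > 0`.  For any
non-semi-perfect `f : Z_s × Z_s → Z_s` and any `(s,ε)`-uniform random variables
`Y₁, Y₂, Y₃` with values in `Z_s` (given by a joint pmf `q` of `(Y₁, Y₃)`, with
`Y₂ = f(Y₁, Y₃)`), if the pair `(Y₁, Y₃)` is `(s², ε)`-uniform, then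
`I(Y₁; Y₃ | Y₂) ≥ δ₁`. -/
theorem cycle_guessing_stmt9 (s : ℕ) (hs : 2 ≤ s) :
    ∃ ε : ℝ, 0 < ε ∧
      ({x : ℝ | ∃ f : Fin s × Fin s → Fin s,
          IsFlat s f ∧ ¬ IsSemiPerfect s f ∧ x = condMI s f (unifPair s)}.Nonempty) ∧
      0 < delta1 s ∧
      ∀ f : Fin s × Fin s → Fin s, ¬ IsSemiPerfect s f →
        ∀ q : Fin s × Fin s → ℝ, (∀ u, 0 ≤ q u) → (∑ u, q u) = 1 →
          (∀ z : Fin s,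
            |(∑ u ∈ Finset.univ.filter fun u : Fin s × Fin s => u.1 = z, q u)
              - 1 / (s : ℝ)| ≤ ε) →
          (∀ z : Fin s,
            |(∑ u ∈ Finset.univ.filter fun u : Fin s × Fin s => f u = z, q u)
              - 1 / (s : ℝ)| ≤ ε) →
          (∀ z : Fin s,
            |(∑ u ∈ Finset.univ.filter fun u : Fin s × Fin s => u.2 = z, q u)
              - 1 / (s : ℝ)| ≤ ε) →
          (∀ u : Fin s × Fin s, |q u - 1 / (s ^ 2 : ℝ)| ≤ ε) →
          delta1 s ≤ condMI s f q := by
  have h1 : (1:ℝ) < s := by exact_mod_cast hs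
  have hspos : (0:ℝ) < s := by positivity
  set S : Set ℝ := {x : ℝ | ∃ f : Fin s × Fin s → Fin s,
          IsFlat s f ∧ ¬ IsSemiPerfect s f ∧ x = condMI s f (unifPair s)} with hS
  have hne : S.Nonempty := by
    obtain ⟨f, h, h'⟩ := aux_nonempty s hs
    exact ⟨_, f, h, h', rfl⟩
  have hfin : S.Finite := by
    refine (Set.finite_range (fun f : Fin s × Fin s → Fin s => condMI s f (unifPair s))).subset ?_
    rintro x ⟨f, -, -, rfl⟩
    exact ⟨f, rfl⟩
  have hpos : ∀ x ∈ S, 0 < x := by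
    rintro x ⟨f, hf, hn, rfl⟩
    refine lt_of_le_of_ne (aux_nonneg s hs f _ fun u => ?_) fun h => hn ⟨hf, h.symm⟩
    unfold unifPair; positivity
  have hinf : 0 < sInf S := hpos _ (hne.csInf_mem hfin)
  have hd : delta1 s = 1 / 2 * sInf S := rfl
  have hdpos : 0 < delta1 s := by rw [hd]; positivity
  have hev : ∀ᶠ q in nhds (unifPair s), ∀ f : Fin s × Fin s → Fin s,
      IsFlat s f → ¬ IsSemiPerfect s f → delta1 s < condMI s f q := by
    rw [Filter.eventually_all]
    intro f
    by_cases hf : IsFlat s f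
    · by_cases hn : IsSemiPerfect s f
      · exact Filter.Eventually.of_forall fun q _ h => absurd hn h
      · have hlt : delta1 s < condMI s f (unifPair s) := by
          have := csInf_le hfin.bddBelow (show condMI s f (unifPair s) ∈ S from ⟨f, hf, hn, rfl⟩)
          linarith
        filter_upwards [(aux_contMI s f).continuousAt.eventually (lt_mem_nhds hlt)] with q hq _ _
        exact hq
    · exact Filter.Eventually.of_forall fun q h => absurd h hf
  obtain ⟨e, he, H⟩ := Metric.eventually_nhds_iff.1 hev
  have hc : (0:ℝ) < 1 / (2 * s ^ 2 * (s ^ 2 + 1)) := by positivity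
  refine ⟨min (e / 2) (1 / (2 * s ^ 2 * (s ^ 2 + 1))), lt_min (by positivity) hc, hne, hdpos, ?_⟩
  intro f hn q _ _ _ hY2 _ hq
  have hflat : IsFlat s f := by
    by_contra hnf
    unfold IsFlat at hnf
    push Not at hnf
    obtain ⟨z, hz⟩ := hnf
    set F := (univ.filter fun u => f u = z) with hF
    have hz1 := (hY2 z).trans (min_le_right _ _)
    have hcard : (F.card : ℝ) ≤ s ^ 2 := by
      have := Finset.card_le_univ F
      simp only [Fintype.card_prod, Fintype.card_fin] at this
      rw [sq]; exact_mod_cast this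
    have hsum : |∑ u ∈ F, q u - F.card / (s:ℝ) ^ 2| ≤
        s ^ 2 * (1 / (2 * s ^ 2 * (s ^ 2 + 1))) := by
      have : ∑ u ∈ F, q u - F.card / (s:ℝ) ^ 2 = ∑ u ∈ F, (q u - 1 / (s ^ 2 : ℝ)) := by
        rw [Finset.sum_sub_distrib, Finset.sum_const, nsmul_eq_mul]; ring
      rw [this]
      refine (Finset.abs_sum_le_sum_abs _ _).trans ?_
      refine (Finset.sum_le_card_nsmul _ _ _ fun u _ => (hq u).trans (min_le_right _ _)).trans ?_
      rw [nsmul_eq_mul]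
      exact mul_le_mul_of_nonneg_right hcard hc.le
    have hge : 1 / (s:ℝ) ^ 2 ≤ |(F.card : ℝ) / s ^ 2 - 1 / s| := by
      have : (F.card : ℝ) / s ^ 2 - 1 / s = ((F.card : ℤ) - (s : ℤ) : ℤ) / (s:ℝ) ^ 2 := by
        push_cast; field_simp
      rw [this, abs_div, abs_of_pos (show (0:ℝ) < s ^ 2 by positivity)]
      have h2 : (1:ℤ) ≤ |(F.card : ℤ) - (s : ℤ)| := Int.one_le_abs (by omega)
      have h3 : (1:ℝ) ≤ |(((F.card : ℤ) - (s : ℤ) : ℤ) : ℝ)| := by exact_mod_cast h2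
      gcongr
    have htri : |(F.card : ℝ) / (s:ℝ) ^ 2 - 1 / (s:ℝ)| ≤
        (s:ℝ) ^ 2 * (1 / (2 * (s:ℝ) ^ 2 * ((s:ℝ) ^ 2 + 1))) + 1 / (2 * (s:ℝ) ^ 2 * ((s:ℝ) ^ 2 + 1)) := by
      rw [abs_le] at hsum hz1 ⊢
      constructor <;> linarith [hsum.1, hsum.2, hz1.1, hz1.2]
    have heq : (s:ℝ) ^ 2 * (1 / (2 * s ^ 2 * (s ^ 2 + 1))) + 1 / (2 * s ^ 2 * (s ^ 2 + 1))
        = 1 / s ^ 2 / 2 := by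
      field_simp
    have : 0 < 1 / (s:ℝ) ^ 2 := by positivity
    linarith
  refine (H ?_ f hflat hn).le
  rw [dist_pi_lt_iff he]
  intro u
  rw [Real.dist_eq]
  have := (hq u).trans (min_le_left _ _)
  unfold unifPair
  linarith
end

section
/- Let s ≥ 2 be an integer and let f : Z_s × Z_s → Z_s be a semi-perfect function. Then for every z ∈ Z_s, f^{−1}(z) = L(f,z) × R(f,z), and moreover |L(f,z)| · |R(f,z)| = s. -/
open Finset

/-- `L(f,z) = { x : f(x,y) = z for some y }`. -/
def Lset (s : ℕ) (f : Fin s × Fin s → Fin s) (z : Fin s) : Finset (Fin s) :=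
  Finset.univ.filter fun x => ∃ y, f (x, y) = z

/-- `R(f,z) = { y : f(x,y) = z for some x }`. -/
def Rset (s : ℕ) (f : Fin s × Fin s → Fin s) (z : Fin s) : Finset (Fin s) :=
  Finset.univ.filter fun y => ∃ x, f (x, y) = z

theorem pEnt_unif (s : ℕ) {β : Type} [DecidableEq β] [Fintype β] (g : Fin s × Fin s → β) :
    pEnt s (unifPair s) g = -∑ u : Fin s × Fin s, (1 / (s ^ 2 : ℝ)) *
      Real.logb s (((univ.filter fun v => g v = g u).card : ℝ) * (1 / (s ^ 2 : ℝ))) := by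
  unfold pEnt unifPair
  congr 1
  rw [← Finset.sum_fiberwise (s := (univ : Finset (Fin s × Fin s))) (g := g)]
  refine Finset.sum_congr rfl fun y _ => ?_
  rw [Finset.sum_mul]
  refine Finset.sum_congr rfl fun u hu => ?_
  have : g u = y := by simpa using hu
  rw [this, Finset.sum_const, nsmul_eq_mul]

theorem key_sum (s : ℕ) (hs : 2 ≤ s)
    (f : Fin s × Fin s → Fin s) (hf : IsSemiPerfect s f) :
    ∑ u : Fin s × Fin s, Real.log
      (((univ.filter fun v : Fin s × Fin s => (v.1, f v) = (u.1, f u)).card : ℝ) *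
       ((univ.filter fun v : Fin s × Fin s => (v.2, f v) = (u.2, f u)).card : ℝ) / s) = 0 := by
  obtain ⟨hfl, h⟩ := hf
  have hs0 : (0:ℝ) < s := by positivity
  have hl : 0 < Real.log s := Real.log_pos (by exact_mod_cast hs)
  unfold condMI at h
  simp only [pEnt_unif] at h
  rw [← Finset.sum_neg_distrib, ← Finset.sum_neg_distrib, ← Finset.sum_neg_distrib,
    ← Finset.sum_neg_distrib, ← Finset.sum_add_distrib, ← Finset.sum_sub_distrib,
    ← Finset.sum_sub_distrib] at h
  have hc : -(1 / (s ^ 2 : ℝ)) / Real.log s ≠ 0 := by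
    have : 0 < (1 / (s ^ 2 : ℝ)) / Real.log s := by positivity
    rw [neg_div]; linarith
  apply (mul_eq_zero.1 _).resolve_left hc
  rw [Finset.mul_sum, ← h]
  refine Finset.sum_congr rfl fun u _ => ?_
  have h1 : 0 < ((univ.filter fun v : Fin s × Fin s => (v.1, f v) = (u.1, f u)).card : ℝ) := by
    exact_mod_cast Finset.card_pos.2 ⟨u, by simp⟩
  have h2 : 0 < ((univ.filter fun v : Fin s × Fin s => (v.2, f v) = (u.2, f u)).card : ℝ) := by
    exact_mod_cast Finset.card_pos.2 ⟨u, by simp⟩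
  have h3 : (univ.filter fun v : Fin s × Fin s =>
      (v.1, v.2, f v) = (u.1, u.2, f u)).card = 1 := by
    rw [Finset.card_eq_one]
    refine ⟨u, ?_⟩
    ext v
    simp only [mem_filter, mem_univ, true_and, mem_singleton, Prod.mk.injEq]
    constructor
    · rintro ⟨a, b, -⟩; exact Prod.ext a b
    · rintro rfl; simp
  rw [h3, hfl (f u)]
  generalize ((univ.filter fun v : Fin s × Fin s => (v.1, f v) = (u.1, f u)).card : ℝ) = a at *
  generalize ((univ.filter fun v : Fin s × Fin s => (v.2, f v) = (u.2, f u)).card : ℝ) = b at *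
  have hk : (0:ℝ) < 1 / (s ^ 2 : ℝ) := by positivity
  generalize 1 / (s ^ 2 : ℝ) = k at *
  unfold Real.logb
  rw [Real.log_div (by positivity) (by positivity), Real.log_mul h1.ne' h2.ne',
    Real.log_mul h1.ne' hk.ne', Real.log_mul h2.ne' hk.ne', Real.log_mul hs0.ne' hk.ne']
  simp only [Nat.cast_one, one_mul]
  field_simp
  ring

theorem fib_sum (s : ℕ) (f : Fin s × Fin s → Fin s) (hf : IsFlat s f)
    (p : Fin s × Fin s → Fin s) (z : Fin s) :
    ∑ x, ((univ.filter fun v : Fin s × Fin s => (p v, f v) = (x, z)).card : ℝ) = s := by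
  have h := hf z
  rw [Finset.card_eq_sum_card_fiberwise (f := p) (t := univ) (by simp)] at h
  rw [← Nat.cast_sum]
  congr 1
  refine Eq.trans ?_ h
  refine Finset.sum_congr rfl fun x _ => ?_
  rw [Finset.filter_filter]
  congr 1
  ext v
  simp [and_comm]

/-- Let `s ≥ 2` and let `f : Z_s × Z_s → Z_s` be a semi-perfect
function.  Then for every `z ∈ Z_s`, `f⁻¹(z) = L(f,z) × R(f,z)`, and moreover
`|L(f,z)| · |R(f,z)| = s`. -/
theorem cycle_guessing_stmt14 (s : ℕ) (hs : 2 ≤ s)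
    (f : Fin s × Fin s → Fin s) (hf : IsSemiPerfect s f) :
    ∀ z : Fin s,
      (Finset.univ.filter fun u : Fin s × Fin s => f u = z) =
          Lset s f z ×ˢ Rset s f z ∧
        (Lset s f z).card * (Rset s f z).card = s := by
  have key := key_sum s hs f hf
  have hfl := hf.1
  have hs0 : (0:ℝ) < s := by positivity
  let a : Fin s → Fin s → ℝ := fun x z =>
    ((univ.filter fun v : Fin s × Fin s => (v.1, f v) = (x, z)).card : ℝ)
  let b : Fin s → Fin s → ℝ := fun x z =>
    ((univ.filter fun v : Fin s × Fin s => (v.2, f v) = (x, z)).card : ℝ)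
  change ∑ u : Fin s × Fin s, Real.log (a u.1 (f u) * b u.2 (f u) / s) = 0 at key
  have ha0 : ∀ x z, 0 ≤ a x z := fun x z => Nat.cast_nonneg _
  have hb0 : ∀ x z, 0 ≤ b x z := fun x z => Nat.cast_nonneg _
  have ha : ∀ x y z, f (x, y) = z → 0 < a x z := fun x y z h => by
    have : 0 < (univ.filter fun v : Fin s × Fin s => (v.1, f v) = (x, z)).card :=
      Finset.card_pos.2 ⟨(x, y), by simp [h]⟩
    exact Nat.cast_pos.2 this
  have hb : ∀ x y z, f (x, y) = z → 0 < b y z := fun x y z h => by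
    have : 0 < (univ.filter fun v : Fin s × Fin s => (v.2, f v) = (y, z)).card :=
      Finset.card_pos.2 ⟨(x, y), by simp [h]⟩
    exact Nat.cast_pos.2 this
  have hsa : ∀ z, ∑ x, a x z = s := fib_sum s f hfl Prod.fst
  have hsb : ∀ z, ∑ x, b x z = s := fib_sum s f hfl Prod.snd
  have hlow : (s:ℝ) ^ 3 ≤ ∑ u : Fin s × Fin s, a u.1 (f u) * b u.2 (f u) := by
    have h1 : ∑ u : Fin s × Fin s, Real.log (a u.1 (f u) * b u.2 (f u) / s) ≤
        ∑ u : Fin s × Fin s, (a u.1 (f u) * b u.2 (f u) / s - 1) :=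
      Finset.sum_le_sum fun u _ => Real.log_le_sub_one_of_pos
        (div_pos (mul_pos (ha u.1 u.2 _ rfl) (hb u.1 u.2 _ rfl)) hs0)
    rw [key, Finset.sum_sub_distrib, ← Finset.sum_div] at h1
    simp only [Finset.sum_const, Finset.card_univ, Fintype.card_prod, Fintype.card_fin,
      nsmul_eq_mul, mul_one, Nat.cast_mul] at h1
    have h2 : (s:ℝ) * s ≤ (∑ u : Fin s × Fin s, a u.1 (f u) * b u.2 (f u)) / s := by linarith
    rw [le_div_iff₀ hs0] at h2
    linarith [h2]
  have htot : ∑ z, ∑ u : Fin s × Fin s, a u.1 z * b u.2 z = (s:ℝ) ^ 3 := by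
    have : ∀ z, ∑ u : Fin s × Fin s, a u.1 z * b u.2 z = (s:ℝ) * s := fun z => by
      rw [Fintype.sum_prod_type]
      change ∑ x, ∑ y, a x z * b y z = _
      rw [← Finset.sum_mul_sum, hsa, hsb]
    simp only [this, Finset.sum_const, Finset.card_univ, Fintype.card_fin, nsmul_eq_mul]
    ring
  have hnn : ∀ z (u : Fin s × Fin s), 0 ≤ if f u = z then 0 else a u.1 z * b u.2 z := by
    intro z u
    split_ifs
    · exact le_rfl
    · exact mul_nonneg (ha0 _ _) (hb0 _ _)
  have hz : ∑ z, ∑ u : Fin s × Fin s, (if f u = z then 0 else a u.1 z * b u.2 z) ≤ 0 := by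
    have h1 : ∑ u : Fin s × Fin s, a u.1 (f u) * b u.2 (f u) =
        ∑ z, ∑ u : Fin s × Fin s, (if f u = z then a u.1 z * b u.2 z else 0) := by
      rw [Finset.sum_comm]
      refine Finset.sum_congr rfl fun u _ => ?_
      simp
    have h2 : ∑ z, ∑ u : Fin s × Fin s, a u.1 z * b u.2 z =
        ∑ z, ∑ u : Fin s × Fin s, (if f u = z then a u.1 z * b u.2 z else 0) +
        ∑ z, ∑ u : Fin s × Fin s, (if f u = z then 0 else a u.1 z * b u.2 z) := by
      rw [← Finset.sum_add_distrib]
      refine Finset.sum_congr rfl fun z _ => ?_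
      rw [← Finset.sum_add_distrib]
      refine Finset.sum_congr rfl fun u _ => ?_
      split_ifs <;> simp
    linarith
  have hzero : ∀ z (u : Fin s × Fin s), f u ≠ z → a u.1 z * b u.2 z = 0 := by
    intro z u hu
    have h1 := (Finset.sum_eq_zero_iff_of_nonneg
      (fun z _ => Finset.sum_nonneg fun u _ => hnn z u)).1
      (le_antisymm hz (Finset.sum_nonneg fun z _ => Finset.sum_nonneg fun u _ => hnn z u))
      z (mem_univ _)
    have h2 := (Finset.sum_eq_zero_iff_of_nonneg (fun u _ => hnn z u)).1 h1 u (mem_univ _)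
    simpa only [if_neg hu] using h2
  intro z
  have heq : (Finset.univ.filter fun u : Fin s × Fin s => f u = z) =
      Lset s f z ×ˢ Rset s f z := by
    ext ⟨x, y⟩
    simp only [Lset, Rset, mem_filter, mem_univ, true_and, mem_product]
    constructor
    · intro h; exact ⟨⟨y, h⟩, ⟨x, h⟩⟩
    · rintro ⟨⟨y', h1⟩, ⟨x', h2⟩⟩
      by_contra hne
      exact (mul_pos (ha _ _ _ h1) (hb _ _ _ h2)).ne' (hzero z (x, y) hne)
  refine ⟨heq, ?_⟩
  rw [← Finset.card_product, ← heq]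
  exact hfl z
end

section
/- Let s ≥ 2 and n ≥ 4 be integers and let ε be a constant with 0 < ε ≤ 1/(s²(2s+1)). Let P = (f_1,…,f_n) be a non-trivial protocol on C_n with s colours and let X be uniformly distributed on Fix(P) (indices modulo n, so X_0 = X_n). If f_1 and f_2 are semi-perfect functions and the pairs (X_0, X_2) and (X_1, X_3) are (s², ε)-uniform, then for any c_1, c_2 ∈ Z_s, |{ c_0 : f_1(c_0, c_2) = c_1 }| = |{ c_3 : f_2(c_1, c_3) = c_2 }|. -/
open Finset

/-- The pair `(X_a, X_b)` of coordinates of `X ∈_u F` is `(s², ε)`-uniform, i.e. each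
value in `Z_s × Z_s` has probability within `ε` of `1/s²`. -/
def pairUnif (n s : ℕ) [NeZero n] (F : Finset (ZMod n → Fin s))
    (a b : ZMod n) (ε : ℝ) : Prop :=
  ∀ z : Fin s × Fin s,
    |((F.filter fun c => (c a, c b) = z).card : ℝ) / (F.card : ℝ)
      - 1 / (s ^ 2 : ℝ)| ≤ ε

lemma aux_ineq {s : ℕ} (hs : 2 ≤ s) {ε p : ℝ} {a b : ℕ} (hε : 0 < ε)
    (hε' : ε ≤ 1 / ((s : ℝ) ^ 2 * (2 * s + 1))) (ha : a ≤ s) (hb : b ≤ s)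
    (h1 : p ≤ a * (1 / (s ^ 2 : ℝ) + ε)) (h2 : b * (1 / (s ^ 2 : ℝ) - ε) ≤ p) : b ≤ a := by
  by_contra hlt
  push Not at hlt
  have hba : (a : ℝ) + 1 ≤ b := by exact_mod_cast hlt
  have ha' : (a : ℝ) ≤ s := by exact_mod_cast ha
  have hb' : (b : ℝ) ≤ s := by exact_mod_cast hb
  have hs' : (2 : ℝ) ≤ s := by exact_mod_cast hs
  set t : ℝ := 1 / (s ^ 2 : ℝ) with ht
  have htp : 0 < t := by positivity
  have hε2 : ε * (2 * s + 1) ≤ t := by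
    rw [le_div_iff₀ (by positivity)] at hε'
    rw [ht, le_div_iff₀ (by positivity)]
    linarith
  have h3 : ((a : ℝ) + b) * ε ≤ (2 * s) * ε := by
    apply mul_le_mul_of_nonneg_right _ hε.le
    linarith
  have h4 : t ≤ ((b : ℝ) - a) * t := by nlinarith
  nlinarith

lemma aux_prob {n s : ℕ} [NeZero n] (F : Finset (ZMod n → Fin s)) (a b : ZMod n) (ε : ℝ)
    (hu : pairUnif n s F a b ε) (A : Finset (Fin s × Fin s)) :
    |((F.filter fun c => (c a, c b) ∈ A).card : ℝ) / (F.card : ℝ)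
      - A.card * (1 / (s ^ 2 : ℝ))| ≤ A.card * ε := by
  have h : (F.filter fun c => (c a, c b) ∈ A).card
      = ∑ z ∈ A, (F.filter fun c => (c a, c b) = z).card := by
    rw [Finset.card_eq_sum_card_fiberwise (f := fun c => (c a, c b)) (t := A)]
    · apply Finset.sum_congr rfl
      intro z hz
      congr 1
      ext c
      simp only [Finset.mem_filter]
      constructor
      · rintro ⟨⟨h1, _⟩, h2⟩; exact ⟨h1, h2⟩
      · rintro ⟨h1, h2⟩; exact ⟨⟨h1, h2 ▸ hz⟩, h2⟩
    · intro c hc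
      exact (Finset.mem_filter.1 hc).2
  rw [h, Nat.cast_sum, Finset.sum_div, ← nsmul_eq_mul, ← Finset.sum_const,
    ← Finset.sum_sub_distrib, ← nsmul_eq_mul, ← Finset.sum_const]
  exact (Finset.abs_sum_le_sum_abs _ _).trans (Finset.sum_le_sum fun z _ => hu z)

/-- Let `s ≥ 2`, `n ≥ 4` and `0 < ε ≤ 1/(s²(2s+1))`.  Let `P` be a
non-trivial protocol on `C_n` with `s` colours and `X` uniform on `Fix(P)` (indices
modulo `n`, so `X₀ = X_n`).  If `f₁` and `f₂` are semi-perfect and the pairs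
`(X₀, X₂)` and `(X₁, X₃)` are `(s², ε)`-uniform, then for any `c₁, c₂ ∈ Z_s`,
`|{c₀ : f₁(c₀,c₂) = c₁}| = |{c₃ : f₂(c₁,c₃) = c₂}|`. -/
theorem cycle_guessing_stmt15 (n s : ℕ) [NeZero n] (hn : 4 ≤ n) (hs : 2 ≤ s)
    (ε : ℝ) (hε : 0 < ε) (hε' : ε ≤ 1 / ((s : ℝ) ^ 2 * (2 * s + 1)))
    (f : ZMod n → Fin s × Fin s → Fin s)
    (hne : (cycleFix n s f).Nonempty)
    (h1 : IsSemiPerfect s (f 1)) (h2 : IsSemiPerfect s (f 2))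
    (hu02 : pairUnif n s (cycleFix n s f) 0 2 ε)
    (hu13 : pairUnif n s (cycleFix n s f) 1 3 ε) :
    ∀ c1 c2 : Fin s,
      (Finset.univ.filter fun c0 : Fin s => f 1 (c0, c2) = c1).card =
        (Finset.univ.filter fun c3 : Fin s => f 2 (c1, c3) = c2).card := by
  intro c1 c2
  set F := cycleFix n s f with hF
  have e1 : ∀ c ∈ F, c 1 = f 1 (c 0, c 2) := by
    intro c hc
    have := (Finset.mem_filter.1 hc).2 1
    rwa [show (1 : ZMod n) - 1 = 0 by ring, show (1 : ZMod n) + 1 = 2 by ring] at this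
  have e2 : ∀ c ∈ F, c 2 = f 2 (c 1, c 3) := by
    intro c hc
    have := (Finset.mem_filter.1 hc).2 2
    rwa [show (2 : ZMod n) - 1 = 1 by ring, show (2 : ZMod n) + 1 = 3 by ring] at this
  have p1 := aux_prob F 0 2 ε hu02
    ((Finset.univ.filter fun c0 : Fin s => f 1 (c0, c2) = c1) ×ˢ {c2})
  have p2 := aux_prob F 1 3 ε hu13
    ({c1} ×ˢ (Finset.univ.filter fun c3 : Fin s => f 2 (c1, c3) = c2))
  have q1 : (F.filter fun c => (c 0, c 2) ∈
      ((Finset.univ.filter fun c0 : Fin s => f 1 (c0, c2) = c1) ×ˢ {c2}))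
      = F.filter fun c => c 1 = c1 ∧ c 2 = c2 := by
    apply Finset.filter_congr
    intro c hc
    have := e1 c hc
    simp only [Finset.mem_product, Finset.mem_filter, Finset.mem_univ, true_and,
      Finset.mem_singleton]
    constructor
    · rintro ⟨h, h'⟩; subst h'; exact ⟨this.trans h, rfl⟩
    · rintro ⟨h, h'⟩; subst h'; exact ⟨this.symm.trans h, rfl⟩
  have q2 : (F.filter fun c => (c 1, c 3) ∈
      ({c1} ×ˢ (Finset.univ.filter fun c3 : Fin s => f 2 (c1, c3) = c2)))
      = F.filter fun c => c 1 = c1 ∧ c 2 = c2 := by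
    apply Finset.filter_congr
    intro c hc
    have := e2 c hc
    simp only [Finset.mem_product, Finset.mem_filter, Finset.mem_univ, true_and,
      Finset.mem_singleton]
    constructor
    · rintro ⟨h, h'⟩; subst h; exact ⟨rfl, this.trans h'⟩
    · rintro ⟨h, h'⟩; subst h; exact ⟨rfl, this.symm.trans h'⟩
  rw [q1, Finset.card_product, Finset.card_singleton, mul_one, abs_le] at p1
  rw [q2, Finset.card_product, Finset.card_singleton, one_mul, abs_le] at p2
  have ha : (Finset.univ.filter fun c0 : Fin s => f 1 (c0, c2) = c1).card ≤ s :=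
    (Finset.card_le_univ _).trans (Fintype.card_fin s).le
  have hb : (Finset.univ.filter fun c3 : Fin s => f 2 (c1, c3) = c2).card ≤ s :=
    (Finset.card_le_univ _).trans (Fintype.card_fin s).le
  apply le_antisymm
  · exact aux_ineq (p := ((F.filter fun c => c 1 = c1 ∧ c 2 = c2).card : ℝ) / (F.card : ℝ)) hs hε hε' hb ha (by linarith [p2.2]) (by linarith [p1.1])
  · exact aux_ineq (p := ((F.filter fun c => c 1 = c1 ∧ c 2 = c2).card : ℝ) / (F.card : ℝ)) hs hε hε' ha hb (by linarith [p1.2]) (by linarith [p2.1])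
end
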